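/- arXiv:1810.04813 — 4 statements merged into one kernel-verified Lean document; each statement's English description precedes it below -/
import Mathlib

section
/- For any odd integer k ≥ 3 and any prime p > k+2, the alternating sum ∑_{l=1}^{p-1} (-1)^{l-1}/l^k is congruent to 2(1 - 2^{1-k})·B_{p-k}/k modulo p, where B_n denotes the n-th Bernoulli number. -/
/-- `q` is `p`-integral with residue `x`. -/
def PRed (p : ℕ) (q : ℚ) (x : ZMod p) : Prop :=
  ∃ a b : ℤ, (b : ZMod p) ≠ 0 ∧ q * b = a ∧ x * b = a

namespace PRed
variable {p : ℕ} [Fact p.Prime]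

theorem ofInt (a : ℤ) : PRed p (a : ℚ) (a : ZMod p) :=
  ⟨a, 1, by simp, by simp, by simp⟩

theorem ofNat (a : ℕ) : PRed p (a : ℚ) (a : ZMod p) := by
  simpa using ofInt (p := p) (a : ℤ)

theorem add {q r : ℚ} {x y : ZMod p} (h : PRed p q x) (h' : PRed p r y) :
    PRed p (q + r) (x + y) := by
  obtain ⟨a, b, hb, h1, h2⟩ := h
  obtain ⟨c, d, hd, h3, h4⟩ := h'
  refine ⟨a * d + c * b, b * d, by push_cast; exact mul_ne_zero hb hd, ?_, ?_⟩
  · push_cast; rw [← h1, ← h3]; ring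
  · push_cast; rw [← h2, ← h4]; ring

theorem mul {q r : ℚ} {x y : ZMod p} (h : PRed p q x) (h' : PRed p r y) :
    PRed p (q * r) (x * y) := by
  obtain ⟨a, b, hb, h1, h2⟩ := h
  obtain ⟨c, d, hd, h3, h4⟩ := h'
  refine ⟨a * c, b * d, by push_cast; exact mul_ne_zero hb hd, ?_, ?_⟩
  · push_cast; rw [← h1, ← h3]; ring
  · push_cast; rw [← h2, ← h4]; ring

theorem one : PRed p 1 1 := by simpa using ofNat (p := p) 1

theorem zero : PRed p 0 0 := by simpa using ofNat (p := p) 0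

theorem neg {q : ℚ} {x : ZMod p} (h : PRed p q x) : PRed p (-q) (-x) := by
  simpa using (ofInt (p := p) (-1)).mul h

theorem sub {q r : ℚ} {x y : ZMod p} (h : PRed p q x) (h' : PRed p r y) :
    PRed p (q - r) (x - y) := by
  simpa [sub_eq_add_neg] using h.add h'.neg

theorem pow {q : ℚ} {x : ZMod p} (h : PRed p q x) (n : ℕ) : PRed p (q ^ n) (x ^ n) := by
  induction n with
  | zero => simpa using one
  | succ n ih => simpa [pow_succ] using ih.mul h

theorem inv {n : ℕ} (hn : (n : ZMod p) ≠ 0) : PRed p (n : ℚ)⁻¹ (n : ZMod p)⁻¹ := by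
  have : (n : ℚ) ≠ 0 := by
    rintro h
    exact hn (by rw [Nat.cast_eq_zero.mp h]; simp)
  exact ⟨1, n, by simpa using hn, by simp [this], by simp [hn]⟩

theorem sum {s : Finset ℕ} {f : ℕ → ℚ} {g : ℕ → ZMod p} (h : ∀ i ∈ s, PRed p (f i) (g i)) :
    PRed p (∑ i ∈ s, f i) (∑ i ∈ s, g i) := by
  induction s using Finset.induction_on with
  | empty => simpa using zero
  | insert a s ha ih =>
    rw [Finset.sum_insert ha, Finset.sum_insert ha]
    exact (h a (by simp)).add (ih fun i hi => h i (by simp [hi]))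

theorem unique {q : ℚ} {x y : ZMod p} (h : PRed p q x) (h' : PRed p q y) : x = y := by
  obtain ⟨a, b, hb, h1, h2⟩ := h
  obtain ⟨c, d, hd, h3, h4⟩ := h'
  have e : (a * d : ℤ) = c * b := by
    have : (a * d : ℚ) = c * b := by rw [← h1, ← h3]; ring
    exact_mod_cast this
  have e' : (a * d : ZMod p) = c * b := by exact_mod_cast congrArg (Int.cast : ℤ → ZMod p) e
  rw [← h2, ← h4] at e'
  have : (x - y) * (b * d) = 0 := by linear_combination e'
  rcases mul_eq_zero.mp this with h | h
  · exact sub_eq_zero.mp h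
  · exact absurd h (mul_ne_zero hb hd)

theorem cast_eq {q : ℚ} {x : ZMod p} (h : PRed p q x) : (q : ZMod p) = x := by
  have h0 := h
  obtain ⟨a, b, hb, h1, h2⟩ := h
  have hden : (q.den : ZMod p) ≠ 0 := by
    intro hz
    have e : q.num * b = a * q.den := by
      have : (q.num * b : ℚ) = a * q.den := by
        rw [← h1, ← Rat.mul_den_eq_num q]; ring
      exact_mod_cast this
    have hpd : (p : ℤ) ∣ q.den := by
      exact_mod_cast (ZMod.natCast_eq_zero_iff q.den p).mp hz
    have hpn : (p : ℤ) ∣ q.num * b := e ▸ Dvd.dvd.mul_left hpd a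
    rcases (Nat.prime_iff_prime_int.mp (Fact.out : p.Prime)).dvd_or_dvd hpn with h | h
    · have hc := q.reduced
      have h3 : p ∣ q.num.natAbs := Int.natCast_dvd.mp h
      have h4 : p ∣ q.den := by exact_mod_cast hpd
      have := Nat.dvd_gcd h3 h4
      rw [hc] at this
      exact (Fact.out : p.Prime).one_lt.ne' (Nat.dvd_one.mp this)
    · exact hb ((ZMod.intCast_zmod_eq_zero_iff_dvd b p).mpr h)
  refine PRed.unique (q := q) ⟨q.num, q.den, by simpa using hden, ?_, ?_⟩ h0
  · simp
  · rw [Rat.cast_def]; simp [hden]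

end PRed

theorem natCast_ne_zero_aux {p n : ℕ} (h0 : 0 < n) (hn : n < p) : (n : ZMod p) ≠ 0 := by
  rw [Ne, ZMod.natCast_eq_zero_iff]
  exact Nat.not_dvd_of_pos_of_lt h0 hn

theorem bernoulli'_pred {p : ℕ} [Fact p.Prime] (n : ℕ) (hn : n + 1 < p) :
    ∃ x, PRed p (bernoulli' n) x := by
  induction n using Nat.strong_induction_on with
  | _ n ih =>
    have : ∀ i, ∃ x, i < n → PRed p (bernoulli' i) x := by
      intro i
      by_cases h : i < n
      · obtain ⟨x, hx⟩ := ih i h (by omega)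
        exact ⟨x, fun _ => hx⟩
      · exact ⟨0, fun h' => absurd h' h⟩
    choose g hg using this
    rw [bernoulli'_def]
    refine ⟨1 - ∑ i ∈ Finset.range n, (n.choose i : ZMod p) * ((n - i + 1 : ℕ) : ZMod p)⁻¹ * g i,
      PRed.one.sub (PRed.sum ?_)⟩
    intro i hi
    have hi := Finset.mem_range.mp hi
    have e : (n.choose i : ℚ) / (n - i + 1) * bernoulli' i
      = n.choose i * ((n - i + 1 : ℕ) : ℚ)⁻¹ * bernoulli' i := by
      rw [div_eq_mul_inv]; push_cast [Nat.cast_sub hi.le]; rfl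
    rw [e]
    exact ((PRed.ofNat _).mul (PRed.inv (natCast_ne_zero_aux (by omega) (by omega)))).mul (hg i hi)

theorem bernoulli_pred {p : ℕ} [Fact p.Prime] (n : ℕ) (hn : n + 1 < p) :
    ∃ x, PRed p (bernoulli n) x := by
  obtain ⟨x, hx⟩ := bernoulli'_pred n hn
  exact ⟨_, by simpa [bernoulli] using ((PRed.ofInt (p := p) (-1)).pow n).mul hx⟩

theorem bernoulli_poly_pred {p : ℕ} [Fact p.Prime] (n : ℕ) (hn : n + 1 < p) :
    ∃ f : ZMod p → ZMod p, ∀ q x, PRed p q x →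
      PRed p ((Polynomial.bernoulli n).eval q) (f x) := by
  have : ∀ i, ∃ x, i ≤ n → PRed p (bernoulli i) x := by
    intro i
    by_cases h : i ≤ n
    · obtain ⟨x, hx⟩ := bernoulli_pred (p := p) i (by omega)
      exact ⟨x, fun _ => hx⟩
    · exact ⟨0, fun h' => absurd h' h⟩
  choose g hg using this
  refine ⟨fun x => ∑ i ∈ Finset.range (n + 1), g i * (n.choose i : ZMod p) * x ^ (n - i), ?_⟩
  intro q x hq
  rw [Polynomial.bernoulli, Polynomial.eval_finsetSum]
  refine PRed.sum fun i hi => ?_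
  rw [Polynomial.eval_monomial]
  exact ((hg i (by have := Finset.mem_range.mp hi; omega)).mul (PRed.ofNat _)).mul (hq.pow _)

theorem bernoulli_half (n : ℕ) :
    (Polynomial.bernoulli n).eval (1 / 2 : ℚ) + bernoulli n = 2 * (1 / 2) ^ n * bernoulli n := by
  have hF := Polynomial.bernoulli_generating_function (1 / 2 : ℚ)
  have hG := bernoulliPowerSeries_mul_exp_sub_one ℚ
  set F := (PowerSeries.mk fun n => Polynomial.aeval (1 / 2 : ℚ) ((1 / (n.factorial : ℚ)) • Polynomial.bernoulli n)) with hFd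
  set h := PowerSeries.rescale (1 / 2 : ℚ) (PowerSeries.exp ℚ) with hh
  have he : PowerSeries.exp ℚ = h * h := by
    have := PowerSeries.exp_mul_exp_eq_exp_add (A := ℚ) (1 / 2) (1 / 2)
    rw [hh, this]; norm_num
  have hR : PowerSeries.rescale (1 / 2 : ℚ) (bernoulliPowerSeries ℚ) * (h - 1)
      = PowerSeries.C (1 / 2 : ℚ) * PowerSeries.X := by
    have := congrArg (PowerSeries.rescale (1 / 2 : ℚ)) hG
    rw [map_mul, map_sub, map_one] at this
    rw [hh, this, PowerSeries.rescale_X]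
  have hC : (2 : PowerSeries ℚ) * PowerSeries.C (1 / 2 : ℚ) = 1 := by
    have : (2 : PowerSeries ℚ) = PowerSeries.C (2 : ℚ) := (map_ofNat PowerSeries.C 2).symm
    rw [this, ← map_mul]; norm_num
  have hne : PowerSeries.exp ℚ - 1 ≠ 0 := by
    intro hz
    rw [hz, mul_zero] at hG
    exact PowerSeries.X_ne_zero hG.symm
  have key : F + bernoulliPowerSeries ℚ
      = 2 * PowerSeries.rescale (1 / 2 : ℚ) (bernoulliPowerSeries ℚ) := by
    apply mul_right_cancel₀ hne
    rw [add_mul, hF, hG, he]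
    linear_combination (-2) * (h + 1) * hR - (h + 1) * PowerSeries.X * hC
  have := congrArg (PowerSeries.coeff n) key
  have two : (2 : PowerSeries ℚ) = PowerSeries.C (2 : ℚ) := (map_ofNat PowerSeries.C 2).symm
  rw [two, map_add, PowerSeries.coeff_C_mul, PowerSeries.coeff_rescale, hFd,
    bernoulliPowerSeries, PowerSeries.coeff_mk, PowerSeries.coeff_mk] at this
  have hf : (n.factorial : ℚ) ≠ 0 := by positivity
  rw [map_smul, Polynomial.coe_aeval_eq_eval] at this
  simp only [smul_eq_mul, Algebra.algebraMap_self, RingHom.id_apply] at this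
  field_simp at this
  field_simp
  linear_combination this

theorem alt_sum_aux {R : Type*} [CommRing R] (f : ℕ → R) (h : ℕ) :
    ∑ l ∈ Finset.range (2 * h + 1), (-1) ^ l * f l
      = 2 * ∑ j ∈ Finset.range (h + 1), f (2 * j) - ∑ l ∈ Finset.range (2 * h + 1), f l := by
  induction h with
  | zero => simp; ring
  | succ h ih =>
    rw [show 2 * (h + 1) + 1 = 2 * h + 1 + 1 + 1 by ring, Finset.sum_range_succ,
      Finset.sum_range_succ, ih, Finset.sum_range_succ _ (h + 1),
      Finset.sum_range_succ _ (2 * h + 1 + 1), Finset.sum_range_succ _ (2 * h + 1)]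
    rw [show 2 * (h + 1) = 2 * h + 1 + 1 by ring]
    have : (-1 : R) ^ (2 * h) = 1 := by simp [pow_mul]
    have t1 : (-1 : R) ^ (2 * h + 1) = -1 := by rw [pow_succ, this]; ring
    have t2 : (-1 : R) ^ (2 * h + 1 + 1) = 1 := by rw [pow_succ, t1]; ring
    rw [t1, t2]; ring

theorem sum_odd_pow_aux {p : ℕ} [Fact p.Prime] (hp : 2 < p) {m : ℕ} (hm : Odd m) :
    ∑ l ∈ Finset.range p, (l : ZMod p) ^ m = 0 := by
  obtain ⟨q, rfl⟩ : ∃ q, p = q + 1 := ⟨p - 1, by omega⟩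
  rw [Finset.sum_range_succ']
  have hm0 : m ≠ 0 := by rintro rfl; simp at hm
  simp only [Nat.cast_zero, zero_pow hm0, add_zero]
  have e := Finset.sum_range_reflect (fun l => ((l + 1 : ℕ) : ZMod (q + 1)) ^ m) q
  have e2 : ∑ l ∈ Finset.range q, ((q - 1 - l + 1 : ℕ) : ZMod (q + 1)) ^ m
      = - ∑ l ∈ Finset.range q, ((l + 1 : ℕ) : ZMod (q + 1)) ^ m := by
    rw [← Finset.sum_neg_distrib]
    refine Finset.sum_congr rfl fun l hl => ?_
    have hl := Finset.mem_range.mp hl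
    rw [← hm.neg_pow]
    congr 1
    rw [eq_neg_iff_add_eq_zero, ← Nat.cast_add, show q - 1 - l + 1 + (l + 1) = q + 1 by omega]
    exact ZMod.natCast_self _
  rw [e2] at e
  have h2 : ((2 : ℕ) : ZMod (q + 1)) ≠ 0 := natCast_ne_zero_aux (by omega) hp
  have : ((2 : ℕ) : ZMod (q + 1)) * ∑ l ∈ Finset.range q, ((l + 1 : ℕ) : ZMod (q + 1)) ^ m = 0 := by
    push_cast at e ⊢
    linear_combination -e
  exact (mul_eq_zero.mp this).resolve_left h2

/-- For odd `k ≥ 3` and a prime `p > k + 2`, the alternating power sum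
`∑_{l=1}^{p-1} (-1)^{l-1}/l^k` is congruent to `2(1 - 2^{1-k}) B_{p-k}/k` mod `p`. -/
theorem stmt_1 (k p : ℕ) (hk : 3 ≤ k) (hodd : Odd k) [Fact p.Prime]
    (hp : k + 2 < p) :
    ∑ l ∈ Finset.Icc 1 (p - 1), (-1 : ZMod p) ^ (l - 1) * ((l : ZMod p))⁻¹ ^ k =
      2 * (1 - (2 : ZMod p) ^ ((1 : ℤ) - k)) * ((bernoulli (p - k) / k : ℚ) : ZMod p) := by
  have hpp : p.Prime := Fact.out
  have hpodd : Odd p := hpp.odd_of_ne_two (by omega)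
  obtain ⟨h, hh⟩ := hpodd
  obtain ⟨m, hm⟩ : ∃ m, p = m + 1 + k := ⟨p - 1 - k, by omega⟩
  have hmodd : Odd m := by
    obtain ⟨r, hr⟩ := hodd
    exact ⟨h - r - 1, by omega⟩
  have hm0 : m ≠ 0 := by omega
  have h2 : (2 : ZMod p) ≠ 0 := by
    simpa using natCast_ne_zero_aux (p := p) (n := 2) (by omega) (by omega)
  have hk0 : (k : ZMod p) ≠ 0 := natCast_ne_zero_aux (by omega) (by omega)
  -- the left side as a half sum
  have hL : ∑ l ∈ Finset.Icc 1 (p - 1), (-1 : ZMod p) ^ (l - 1) * ((l : ZMod p))⁻¹ ^ k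
      = - ∑ l ∈ Finset.range p, (-1 : ZMod p) ^ l * (l : ZMod p) ^ m := by
    have hr : Finset.range p = insert 0 (Finset.Icc 1 (p - 1)) := by
      ext x; simp; omega
    rw [hr, Finset.sum_insert (by simp), Nat.cast_zero, zero_pow hm0, mul_zero, zero_add,
      ← Finset.sum_neg_distrib]
    refine Finset.sum_congr rfl fun l hl => ?_
    obtain ⟨hl1, hl2⟩ := Finset.mem_Icc.mp hl
    have hl0 : (l : ZMod p) ≠ 0 := natCast_ne_zero_aux (by omega) (by omega)
    have hf := ZMod.pow_card_sub_one_eq_one hl0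
    rw [show p - 1 = m + k by omega, pow_add] at hf
    have : ((l : ZMod p))⁻¹ ^ k = (l : ZMod p) ^ m := by
      rw [inv_pow]; exact inv_eq_of_mul_eq_one_left hf
    rw [this]
    obtain ⟨l', rfl⟩ : ∃ l', l = l' + 1 := ⟨l - 1, by omega⟩
    rw [Nat.add_sub_cancel, pow_succ]; ring
  have hA := alt_sum_aux (fun l => (l : ZMod p) ^ m) h
  rw [← hh, sum_odd_pow_aux (by omega) hmodd] at hA
  have hB : ∑ j ∈ Finset.range (h + 1), ((2 * j : ℕ) : ZMod p) ^ m
      = 2 ^ m * ∑ j ∈ Finset.range (h + 1), (j : ZMod p) ^ m := by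
    rw [Finset.mul_sum]
    refine Finset.sum_congr rfl fun j _ => ?_
    push_cast; rw [mul_pow]
  rw [hL, hA, hB]
  set S := ∑ j ∈ Finset.range (h + 1), (j : ZMod p) ^ m with hS
  -- Bernoulli side
  obtain ⟨b, hb⟩ := bernoulli_pred (p := p) (m + 1) (by omega)
  obtain ⟨f, hf⟩ := bernoulli_poly_pred (p := p) (m + 1) (by omega)
  have hx : ((h + 1 : ℕ) : ZMod p) = ((2 : ℕ) : ZMod p)⁻¹ := by
    apply eq_inv_of_mul_eq_one_left
    rw [← Nat.cast_mul, show (h + 1) * 2 = p + 1 by omega]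
    simp
  have h1 := hf _ _ (PRed.ofNat (p := p) (h + 1))
  have h3 := hf _ _ (PRed.inv (p := p) (n := 2) (by simpa using h2))
  rw [hx] at h1
  set y := f ((2 : ℕ) : ZMod p)⁻¹
  have hSr : PRed p (∑ j ∈ Finset.range (h + 1), (j : ℚ) ^ m) S :=
    PRed.sum fun j _ => (PRed.ofNat j).pow m
  have e1 : ((m + 1 : ℕ) : ZMod p) * S = y - b := by
    have hq : ((m + 1 : ℕ) : ℚ) * ∑ j ∈ Finset.range (h + 1), (j : ℚ) ^ m
        = (Polynomial.bernoulli (m + 1)).eval ((h + 1 : ℕ) : ℚ) - bernoulli (m + 1) := by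
      have := Polynomial.sum_range_pow_eq_bernoulli_sub (h + 1) m
      push_cast at this ⊢
      exact this
    have hl := (PRed.ofNat (p := p) (m + 1)).mul hSr
    rw [hq] at hl
    exact hl.unique (h1.sub hb)
  have e2 : y + b = 2 * ((2 : ZMod p)⁻¹) ^ (m + 1) * b := by
    have hl := h3.add hb
    have hi := PRed.inv (p := p) (n := 2) (by simpa using h2)
    have hr := ((PRed.ofNat (p := p) 2).mul (hi.pow (m + 1))).mul hb
    have hq := bernoulli_half (m + 1)
    rw [one_div] at hq
    push_cast at hl hr
    rw [hq] at hl
    exact hl.unique hr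
  have e3 : ((bernoulli (p - k) / k : ℚ) : ZMod p) = b * (k : ZMod p)⁻¹ := by
    rw [show p - k = m + 1 by omega, div_eq_mul_inv]
    exact (hb.mul (PRed.inv hk0)).cast_eq
  have e4 : ((m + 1 : ℕ) : ZMod p) = -k := by
    rw [eq_neg_iff_add_eq_zero, ← Nat.cast_add, ← hm]
    exact ZMod.natCast_self _
  rw [e3]
  rw [e4] at e1
  obtain ⟨r, rfl⟩ : ∃ r, k = r + 1 := ⟨k - 1, by omega⟩
  have e5 : (2 : ZMod p) ^ ((1 : ℤ) - (r + 1 : ℕ)) = (2 ^ r)⁻¹ := by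
    rw [show (1 : ℤ) - (r + 1 : ℕ) = -(r : ℤ) by push_cast; ring, zpow_neg, zpow_natCast]
  have e6 : (2 : ZMod p) ^ m * 2 * 2 ^ r = 1 := by
    have := ZMod.pow_card_sub_one_eq_one h2
    rw [show p - 1 = m + 1 + r by omega, pow_add, pow_succ] at this
    exact this
  have e7 : ((2 : ZMod p)⁻¹) ^ (m + 1) = 2 ^ r := by
    rw [inv_pow, pow_succ]
    exact inv_eq_of_mul_eq_one_right e6
  have hr0 : (2 : ZMod p) ^ r ≠ 0 := pow_ne_zero _ h2
  rw [e5]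
  rw [e7] at e2
  have e8 : (2 : ZMod p) ^ m = (2 * 2 ^ r)⁻¹ :=
    eq_inv_of_mul_eq_one_left (by rw [← mul_assoc]; exact e6)
  rw [e8]
  field_simp
  linear_combination e1 + e2
end

section
/- Fix k ≥ 2 and s ≥ 1 with k ≥ 2s. Let I_0(k,s) be the set of indices (k_1,...,k_r) of positive integers with k_1 > 1, total sum k, and exactly s components greater than 1. Then for each prime p > k+2, the sum ∑_{𝐤 ∈ I_0(k,s)} H_p^⋆(𝐤) is congruent modulo p to 2·binom(k-1, 2s-1)·(1 - 2^{1-k})·B_{p-k}/k, where H_p^⋆(k_1,...,k_r) = ∑_{p>m_1≥⋯≥m_r>0} ∏ m_i^{-k_i} and B_n is the Bernoulli number. -/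
/-- Auxiliary non-strict truncated multiple harmonic sum. -/
def HstarAux (p : ℕ) : ℕ → List ℕ → ZMod p
  | _, [] => 1
  | N, k :: ks => ∑ m ∈ Finset.Ioo 0 N, ((m : ZMod p))⁻¹ ^ k * HstarAux p (m + 1) ks

/-- `H_p^⋆(k₁,…,k_r) = ∑_{p > m₁ ≥ ⋯ ≥ m_r > 0} ∏ᵢ mᵢ^{-kᵢ}` in `ℤ/pℤ`. -/
def Hps (p : ℕ) (ks : List ℕ) : ZMod p := HstarAux p p ks

/-- `I₀(k,s)`: indices `(k₁,…,k_r)` of positive integers (compositions of `k`)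
with `k₁ > 1` and exactly `s` components greater than `1`. -/
def Izero (k s : ℕ) : Finset (Composition k) :=
  Finset.univ.filter fun c =>
    2 ≤ c.blocks.headI ∧ (c.blocks.filter fun x => 2 ≤ x).length = s


namespace AO

/-- reduction relation -/
def Rl (p : ℕ) [Fact p.Prime] (q : ℚ) (a : ZMod p) : Prop :=
  ∃ (n : ℤ) (d : ℕ), (d : ZMod p) ≠ 0 ∧ q = n / d ∧ a = n / d

section
variable {p : ℕ} [Fact p.Prime]

lemma Rl.cast {q : ℚ} {a : ZMod p} (h : Rl p q a) : (q : ZMod p) = a := by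
  obtain ⟨n, d, hd, rfl, rfl⟩ := h
  have h1 : ((n : ℚ) / (d : ℚ)) = Rat.divInt n (d : ℤ) := by
    rw [Rat.divInt_eq_div]; simp
  rw [h1, Rat.cast_divInt_of_ne_zero]
  · simp
  · simpa using hd

lemma d_ne {d : ℕ} (hd : (d : ZMod p) ≠ 0) : (d : ℚ) ≠ 0 := by
  rintro h
  apply hd
  have : d = 0 := by exact_mod_cast h
  simp [this]

lemma Rl.add {q r : ℚ} {a b : ZMod p} (h : Rl p q a) (h' : Rl p r b) : Rl p (q + r) (a + b) := by
  obtain ⟨n, d, hd, rfl, rfl⟩ := h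
  obtain ⟨m, e, he, rfl, rfl⟩ := h'
  have := d_ne hd
  have := d_ne he
  refine ⟨n * e + d * m, d * e, by push_cast; exact mul_ne_zero hd he, ?_, ?_⟩
  · push_cast; rw [div_add_div _ _ (by assumption) (by assumption)]
  · push_cast; rw [div_add_div _ _ (by assumption) (by assumption)]

lemma Rl.mul {q r : ℚ} {a b : ZMod p} (h : Rl p q a) (h' : Rl p r b) : Rl p (q * r) (a * b) := by
  obtain ⟨n, d, hd, rfl, rfl⟩ := h
  obtain ⟨m, e, he, rfl, rfl⟩ := h'
  refine ⟨n * m, d * e, by push_cast; exact mul_ne_zero hd he, ?_, ?_⟩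
  · push_cast; rw [div_mul_div_comm]
  · push_cast; rw [div_mul_div_comm]

lemma Rl.int (n : ℤ) : Rl p (n : ℚ) (n : ZMod p) := ⟨n, 1, by simp, by simp, by simp⟩

lemma Rl.nat (n : ℕ) : Rl p (n : ℚ) (n : ZMod p) := by simpa using Rl.int (p := p) (n : ℤ)

lemma Rl.inv (n : ℕ) (h : (n : ZMod p) ≠ 0) : Rl p ((n : ℚ)⁻¹) ((n : ZMod p)⁻¹) :=
  ⟨1, n, h, by simp, by simp⟩

lemma Rl.neg {q : ℚ} {a : ZMod p} (h : Rl p q a) : Rl p (-q) (-a) := by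
  simpa using (Rl.int (p := p) (-1)).mul h

lemma Rl.sub {q r : ℚ} {a b : ZMod p} (h : Rl p q a) (h' : Rl p r b) : Rl p (q - r) (a - b) := by
  simpa [sub_eq_add_neg] using h.add h'.neg

lemma Rl.sum {ι : Type*} (s : Finset ι) {f : ι → ℚ} {g : ι → ZMod p}
    (h : ∀ i ∈ s, Rl p (f i) (g i)) : Rl p (∑ i ∈ s, f i) (∑ i ∈ s, g i) := by
  classical
  induction s using Finset.induction_on with
  | empty => simpa using Rl.nat (p := p) 0
  | insert a s ha ih =>
    rw [Finset.sum_insert ha, Finset.sum_insert ha]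
    exact (h a (by simp)).add (ih fun i hi => h i (by simp [hi]))

lemma Rl.pow {q : ℚ} {a : ZMod p} (h : Rl p q a) (n : ℕ) : Rl p (q ^ n) (a ^ n) := by
  induction n with
  | zero => simpa using Rl.nat (p := p) 1
  | succ n ih => rw [pow_succ, pow_succ]; exact ih.mul h

lemma nat_ne {n : ℕ} (h0 : 0 < n) (h : n < p) : (n : ZMod p) ≠ 0 := by
  rw [Ne, ZMod.natCast_eq_zero_iff]
  exact fun hd => absurd (Nat.le_of_dvd h0 hd) (by omega)

lemma bern'_int (n : ℕ) (hn : n + 2 ≤ p) : ∃ a, Rl p (bernoulli' n) a := by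
  induction n using Nat.strong_induction_on with
  | _ n ih =>
    have : ∀ k, ∃ a, k < n → Rl p (bernoulli' k) a := by
      intro k
      by_cases hk : k < n
      · obtain ⟨a, ha⟩ := ih k hk (by omega)
        exact ⟨a, fun _ => ha⟩
      · exact ⟨0, fun h => absurd h hk⟩
    choose b hb using this
    refine ⟨1 - ∑ k ∈ Finset.range n, (n.choose k : ZMod p) * ((n - k + 1 : ℕ) : ZMod p)⁻¹ * b k, ?_⟩
    rw [bernoulli'_def]
    have h1 : Rl p 1 1 := by simpa using Rl.nat (p := p) 1
    refine h1.sub (Rl.sum _ fun k hk => ?_)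
    have hk' := Finset.mem_range.mp hk
    have := ((Rl.nat (p := p) (n.choose k)).mul (Rl.inv (p := p) (n - k + 1)
      (nat_ne (by omega) (by omega)))).mul (hb k hk')
    rw [div_eq_mul_inv]
    rw [Nat.cast_add, Nat.cast_sub hk'.le] at this
    simpa using this

lemma bern_int (n : ℕ) (hn : n + 2 ≤ p) : ∃ a, Rl p (bernoulli n) a := by
  obtain ⟨a, ha⟩ := bern'_int (p := p) n hn
  refine ⟨(-1) ^ n * a, ?_⟩
  have := ((Rl.int (p := p) (-1)).pow n).mul ha
  simpa [bernoulli] using this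

end

/-- Euler-type numbers -/
noncomputable def Eu (q : ℕ) : ℚ := 2 * (1 - 2 ^ (q + 1)) * bernoulli (q + 1) / (q + 1)

lemma Eu_series : (PowerSeries.mk fun q => Eu q / (q.factorial : ℚ)) * (PowerSeries.exp ℚ + 1)
    = 2 := by
  have h1 := bernoulliPowerSeries_mul_exp_sub_one ℚ
  have h2 := congrArg (PowerSeries.rescale (2 : ℚ)) h1
  have h3 : PowerSeries.rescale (2 : ℚ) (PowerSeries.exp ℚ) = PowerSeries.exp ℚ ^ 2 := by
    rw [PowerSeries.exp_pow_eq_rescale_exp]; simp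
  have h4 : (PowerSeries.mk fun q => Eu q / (q.factorial : ℚ)) * PowerSeries.X
      = 2 * (bernoulliPowerSeries ℚ - PowerSeries.rescale (2 : ℚ) (bernoulliPowerSeries ℚ)) := by
    have e2 : (2 : PowerSeries ℚ) = PowerSeries.C 2 := (map_ofNat _ 2).symm
    ext n
    rw [e2, PowerSeries.coeff_C_mul]
    cases n with
    | zero =>
      rw [map_sub, PowerSeries.coeff_rescale]
      simp
    | succ n =>
      rw [PowerSeries.coeff_succ_mul_X]
      simp only [bernoulliPowerSeries, PowerSeries.coeff_mk, map_sub, PowerSeries.coeff_rescale, Eu,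
        Nat.factorial_succ, Algebra.algebraMap_self, RingHom.id_apply]
      push_cast
      have : (n.factorial : ℚ) ≠ 0 := by positivity
      field_simp
      try ring
  set E := PowerSeries.mk fun q => Eu q / (q.factorial : ℚ)
  rw [map_mul, map_sub, h3, map_one, PowerSeries.rescale_X] at h2
  set b := bernoulliPowerSeries ℚ
  set b2 := PowerSeries.rescale (2 : ℚ) b
  set e := PowerSeries.exp ℚ
  have hX : (PowerSeries.X : PowerSeries ℚ) ≠ 0 := PowerSeries.X_ne_zero
  have he : e - 1 ≠ 0 := by
    intro h; rw [h, mul_zero] at h1; exact hX h1.symm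
  have e2 : PowerSeries.C (2 : ℚ) = 2 := map_ofNat _ 2
  rw [e2] at h2
  apply mul_right_cancel₀ hX
  apply mul_right_cancel₀ he
  linear_combination (e^2 - 1) * h4 + 2 * (e + 1) * h1 - 2 * h2

lemma Eu_zero : Eu 0 = 1 := by
  simp [Eu, bernoulli_one]; norm_num

lemma Eu_rec (q : ℕ) (hq : 0 < q) :
    Eu q = - (2 : ℚ)⁻¹ * ∑ i ∈ Finset.range q, (q.choose i : ℚ) * Eu i := by
  have h := congrArg (PowerSeries.coeff q) Eu_series
  have e2 : (2 : PowerSeries ℚ) = PowerSeries.C 2 := (map_ofNat _ 2).symm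
  rw [e2, PowerSeries.coeff_C, if_neg hq.ne', mul_add, map_add, mul_one, PowerSeries.coeff_mul,
    Finset.Nat.sum_antidiagonal_eq_sum_range_succ_mk] at h
  simp only [PowerSeries.coeff_mk, PowerSeries.coeff_exp] at h
  have hf : (q.factorial : ℚ) ≠ 0 := by positivity
  have : ∑ i ∈ Finset.range (q + 1), (q.choose i : ℚ) * Eu i + Eu q = 0 := by
    rw [← mul_eq_zero_iff_left (a := (q.factorial : ℚ)⁻¹) (by positivity)]
    rw [← h, mul_add, Finset.mul_sum, div_eq_inv_mul]
    congr 1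
    refine Finset.sum_congr rfl fun i hi => ?_
    have hi' : i ≤ q := by simpa [Nat.lt_succ_iff] using hi
    rw [Nat.cast_choose ℚ hi']
    simp
    field_simp
  rw [Finset.sum_range_succ] at this
  simp at this
  linarith

section
variable {p : ℕ} [Fact p.Prime]

/-- alternating power sums -/
def ep (p q : ℕ) : ZMod p := ∑ n ∈ Finset.range p, (-1) ^ n * (n : ZMod p) ^ q

lemma ep_zero (hp : 2 < p) : ep p 0 = 1 := by
  have : Odd p := (Fact.out : p.Prime).odd_of_ne_two (by omega)
  have h : ∀ m, ∑ i ∈ Finset.range (2 * m), (-1 : ZMod p) ^ i = 0 := by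
    intro m
    induction m with
    | zero => simp
    | succ m ih => rw [Nat.mul_succ, Finset.sum_range_succ, Finset.sum_range_succ, ih]; simp [pow_succ]
  simp only [ep, pow_zero, mul_one]
  obtain ⟨m, hm⟩ := this
  have h' : Finset.range p = Finset.range (2 * m + 1) := by rw [hm]
  rw [h', Finset.sum_range_succ, h]; simp

lemma ep_rec (hp : 2 < p) (q : ℕ) (hq : 0 < q) :
    ep p q = - (2 : ZMod p)⁻¹ * ∑ i ∈ Finset.range q, (q.choose i : ZMod p) * ep p i := by
  have h2 : (2 : ZMod p) ≠ 0 := by exact_mod_cast nat_ne (p := p) (n := 2) (by omega) hp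
  have h : ∑ i ∈ Finset.range (q + 1), (q.choose i : ZMod p) * ep p i = - ep p q := by
    have h1 : ∑ i ∈ Finset.range (q + 1), (q.choose i : ZMod p) * ep p i
        = ∑ n ∈ Finset.range p, (-1) ^ n * ((n + 1 : ℕ) : ZMod p) ^ q := by
      simp only [ep, Finset.mul_sum]
      rw [Finset.sum_comm]
      refine Finset.sum_congr rfl fun n _ => ?_
      push_cast
      rw [add_pow, Finset.mul_sum]
      refine Finset.sum_congr rfl fun i _ => ?_
      simp; ring
    rw [h1]
    have h3 := Finset.sum_range_succ' (fun n => (-1) ^ n * (n : ZMod p) ^ q) p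
    rw [Finset.sum_range_succ] at h3
    simp [hq.ne'] at h3
    rw [ep, h3, ← Finset.sum_neg_distrib]
    refine Finset.sum_congr rfl fun n _ => ?_
    push_cast; ring
  rw [Finset.sum_range_succ] at h
  simp at h
  field_simp
  linear_combination h

lemma ep_Eu (hp : 2 < p) (q : ℕ) : Rl p (Eu q) (ep p q) := by
  induction q using Nat.strong_induction_on with
  | _ q ih =>
    rcases Nat.eq_zero_or_pos q with rfl | hq
    · rw [Eu_zero, ep_zero hp]; simpa using Rl.nat (p := p) 1
    · rw [Eu_rec q hq, ep_rec hp q hq]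
      have h2 := (Rl.inv (p := p) 2 (nat_ne (by omega) hp)).neg
      refine Rl.mul (by simpa using h2) (Rl.sum _ fun i hi => (Rl.nat _).mul (ih i (by simpa using hi)))

lemma alt_sum (k : ℕ) (hk : 2 ≤ k) (hp : k + 2 < p) :
    ∑ n ∈ Finset.range (p - 1), (-1) ^ n * ((n + 1 : ℕ) : ZMod p)⁻¹ ^ k
      = 2 * (1 - (2 : ZMod p) ^ ((1 : ℤ) - k)) * ((bernoulli (p - k) / k : ℚ) : ZMod p) := by
  obtain ⟨b, hb⟩ := bern_int (p := p) (p - k) (by omega)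
  have hk0 : (k : ZMod p) ≠ 0 := nat_ne (by omega) (by omega)
  have hpk : ((p - k : ℕ) : ZMod p) ≠ 0 := nat_ne (by omega) (by omega)
  have hpk' : ((p - k : ℕ) : ZMod p) = - k := by
    rw [Nat.cast_sub (by omega)]; simp
  have h1 := (hb.mul (Rl.inv (p := p) k hk0)).cast
  rw [← div_eq_mul_inv] at h1
  rw [h1]
  have h2 := (ep_Eu (p := p) (by omega) (p - 1 - k)).cast
  have e1 : p - 1 - k + 1 = p - k := by omega
  have h3 : Rl p (Eu (p - 1 - k)) (2 * (1 - 2 ^ (p - k)) * b * ((p - k : ℕ) : ZMod p)⁻¹) := by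
    have e2 : ((p - 1 - k : ℕ) : ℚ) + 1 = ((p - k : ℕ) : ℚ) := by rw [← e1]; push_cast; ring
    rw [Eu, e1, e2, div_eq_mul_inv]
    have r2 : Rl p 2 2 := by simpa using Rl.nat (p := p) 2
    have r1 : Rl p 1 1 := by simpa using Rl.nat (p := p) 1
    exact ((r2.mul (r1.sub (r2.pow _))).mul hb).mul (Rl.inv _ hpk)
  have h4 : ep p (p - 1 - k) = _ := h2.symm.trans h3.cast
  have h5 : (2 : ZMod p) ^ ((1 : ℤ) - k) = 2 ^ (p - k) := by
    have h2 : (2 : ZMod p) ≠ 0 := by exact_mod_cast nat_ne (p := p) (n := 2) (by omega) (by omega)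
    have : (2 : ZMod p) ^ (p - 1) = 1 := ZMod.pow_card_sub_one_eq_one h2
    rw [show (p - k : ℕ) = p - 1 - (k - 1) by omega, pow_sub₀ _ h2 (by omega), this, one_mul,
      show (1 : ℤ) - k = - ((k - 1 : ℕ) : ℤ) by omega, zpow_neg, zpow_natCast]
  rw [h5]
  have h6 : ∑ n ∈ Finset.range (p - 1), (-1) ^ n * ((n + 1 : ℕ) : ZMod p)⁻¹ ^ k
      = - ep p (p - 1 - k) := by
    have hr : Finset.range p = Finset.range ((p - 1) + 1) := by congr 1; omega
    rw [ep, hr, Finset.sum_range_succ']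
    have : p - 1 - k ≠ 0 := by omega
    simp only [Nat.cast_zero, zero_pow this, mul_zero, add_zero]
    rw [← Finset.sum_neg_distrib]
    refine Finset.sum_congr rfl fun n hn => ?_
    have hn' := Finset.mem_range.mp hn
    have hne : ((n + 1 : ℕ) : ZMod p) ≠ 0 := nat_ne (by omega) (by omega)
    rw [pow_sub₀ _ hne (by omega), ZMod.pow_card_sub_one_eq_one hne, one_mul, inv_pow, pow_succ]
    ring
  rw [h6, h4, hpk', inv_neg]
  ring

end

section
open Finset

lemma chuV {R : Type*} [CommRing R] (b : R) (N : ℕ) : ∀ c : R,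
    ∑ i ∈ range (N + 1), (N.choose i : R) * (-1) ^ i * (∏ l ∈ range i, (b + l)) *
      (∏ l ∈ range (N - i), (c + i + l)) = ∏ l ∈ range N, (c - b + l) := by
  induction N with
  | zero => intro c; simp
  | succ N ih =>
    intro c
    have h1 := ih (c + 1)
    rw [prod_range_succ']
    have h2 : ∏ l ∈ range N, (c - b + ((l + 1 : ℕ) : R)) = ∏ l ∈ range N, (c + 1 - b + (l : R)) := by
      refine prod_congr rfl fun l _ => ?_
      push_cast; ring
    rw [h2, ← h1]
    -- Pascal
    rw [sum_range_succ']
    have h3 : ∀ i ∈ range (N + 1), (((N + 1).choose (i + 1) : ℕ) : R) * (-1) ^ (i + 1) *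
        (∏ l ∈ range (i + 1), (b + l)) * (∏ l ∈ range (N + 1 - (i + 1)), (c + ((i + 1 : ℕ) : R) + l))
        = (N.choose i : R) * (-1) ^ (i + 1) *
        (∏ l ∈ range (i + 1), (b + l)) * (∏ l ∈ range (N - i), (c + ((i + 1 : ℕ) : R) + l))
        + (N.choose (i + 1) : R) * (-1) ^ (i + 1) *
        (∏ l ∈ range (i + 1), (b + l)) * (∏ l ∈ range (N + 1 - (i + 1)), (c + ((i + 1 : ℕ) : R) + l)) := by
      intro i hi
      rw [Nat.choose_succ_succ, Nat.add_sub_add_right]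
      push_cast; ring
    rw [sum_congr rfl h3, sum_add_distrib, add_assoc]
    have h4 := sum_range_succ' (fun i => (N.choose i : R) * (-1) ^ i *
        (∏ l ∈ range i, (b + l)) * (∏ l ∈ range (N + 1 - i), (c + (i : R) + l))) (N + 1)
    simp only [Nat.choose_zero_right] at h4 ⊢
    rw [← h4, sum_range_succ _ (N + 1), Nat.choose_succ_self, Nat.cast_zero, zero_mul, zero_mul, zero_mul,
      add_zero, ← sum_add_distrib, sum_mul]
    refine sum_congr rfl fun i hi => ?_
    have hi' : i ≤ N := by simpa [Nat.lt_succ_iff] using hi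
    rw [show N + 1 - i = (N - i) + 1 by omega, prod_range_succ' _ (N - i), prod_range_succ _ i]
    have h5 : ∏ l ∈ range (N - i), (c + (i : R) + ((l + 1 : ℕ) : R))
        = ∏ l ∈ range (N - i), (c + 1 + (i : R) + (l : R)) := by
      refine prod_congr rfl fun l _ => ?_
      push_cast; ring
    have h6 : ∏ l ∈ range (N - i), (c + ((i + 1 : ℕ) : R) + (l : R))
        = ∏ l ∈ range (N - i), (c + 1 + (i : R) + (l : R)) := by
      refine prod_congr rfl fun l _ => ?_
      push_cast; ring
    rw [h5, h6]
    push_cast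
    ring

variable {p : ℕ} [Fact p.Prime] {K : Type*} [Field K] [CharP K p]

lemma prodf (y : K) : ∏ l ∈ range p, ((l : K) + 1 - y) = y - y ^ p := by
  have hp : p.Prime := Fact.out
  -- polynomial identity over ZMod p
  have h1 : (Polynomial.X ^ p - Polynomial.X : Polynomial (ZMod p)) =
      ∏ a : ZMod p, (Polynomial.X - Polynomial.C a) := by
    have h := FiniteField.roots_X_pow_card_sub_X (ZMod p)
    rw [ZMod.card] at h
    have hm : (Polynomial.X ^ p - Polynomial.X : Polynomial (ZMod p)).Monic :=
      Polynomial.monic_X_pow_sub (by rw [Polynomial.degree_X]; exact_mod_cast hp.one_lt)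
    have h2 := Polynomial.prod_multiset_X_sub_C_of_monic_of_roots_card_eq hm (by
      rw [h, FiniteField.X_pow_card_sub_X_natDegree_eq _ hp.one_lt]; simp)
    rw [h] at h2
    rw [← h2]; rfl
  have h3 := congrArg (Polynomial.eval₂ (ZMod.castHom (dvd_refl p) K) y) h1
  rw [Polynomial.eval₂_finsetProd] at h3
  simp only [Polynomial.eval₂_sub, Polynomial.eval₂_X_pow, Polynomial.eval₂_X, Polynomial.eval₂_C] at h3
  have h4 : ∏ a : ZMod p, (y - ZMod.castHom (dvd_refl p) K a) = ∏ l ∈ range p, (y - ((l : K) + 1)) := by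
    symm
    refine prod_bij (fun l _ => ((l + 1 : ℕ) : ZMod p)) (by simp) ?_ ?_ ?_
    · intro a ha b hb hab
      rw [ZMod.natCast_eq_natCast_iff] at hab
      have := Nat.ModEq.add_right_cancel' 1 hab
      exact Nat.ModEq.eq_of_lt_of_lt this (by simpa using ha) (by simpa using hb)
    · intro b _
      refine ⟨(b - 1).val, by simpa using ZMod.val_lt _, ?_⟩
      push_cast
      rw [ZMod.natCast_zmod_val]; ring
    · intro a _
      rw [map_natCast]; push_cast; rfl
  rw [h4] at h3
  have h5 : ∏ l ∈ range p, ((l : K) + 1 - y) = (-1) ^ p * ∏ l ∈ range p, (y - ((l : K) + 1)) := by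
    rw [← card_range p, ← prod_const, card_range, ← prod_mul_distrib]
    exact prod_congr rfl fun l _ => by ring
  rw [h5, ← h3]
  rcases hp.eq_two_or_odd' with h2 | h2
  · subst h2
    have : (2 : K) = 0 := by exact_mod_cast CharP.cast_eq_zero K 2
    linear_combination (y^2 - y) * this
  · rw [h2.neg_one_pow]; ring

/-- the coefficient of the partial fraction -/
noncomputable def Tm (x : K) (r m : ℕ) : K :=
  (∏ l ∈ range m, ((l : K) + 1) * ((l : K) + 1 - x)) *
    ∏ l ∈ (range (m + 1)).erase r, (((l : K) + 1 - x) ^ 2 - ((r : K) + 1 - x) ^ 2)⁻¹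

lemma castK_ne {a b : ℕ} (ha : a < p) (hb : b < p) (h : a ≠ b) : (a : K) ≠ b := by
  intro he
  rw [CharP.natCast_eq_natCast K p] at he
  exact h (Nat.ModEq.eq_of_lt_of_lt he ha hb)

lemma prod_erase_split {M : Type*} [CommMonoid M] (g : ℕ → M) (r i : ℕ) :
    ∏ l ∈ (range (r + i + 1)).erase r, g l = (∏ l ∈ range r, g l) * ∏ l ∈ range i, g (r + 1 + l) := by
  have : (range (r + i + 1)).erase r = range r ∪ Ico (r + 1) (r + 1 + i) := by
    ext a; simp; omega
  rw [this, prod_union, prod_Ico_eq_prod_range, Nat.add_sub_cancel_left]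
  rw [disjoint_left]; intro a; simp; omega

lemma Tm_mul (x : K) (hx2 : ∀ l : ℕ, (l : K) - 2 * x ≠ 0) (r i N : ℕ) (hN : r + N + 1 = p)
    (hi : i ≤ N) :
    Tm x r (r + i) * ∏ l ∈ (range (r + N + 1)).erase r, ((l : K) + r + 2 - 2 * x) =
      (-1) ^ r * (∏ l ∈ range r, ((l : K) + 1 - x)) * ((N.choose i : K) * (-1) ^ i *
        (∏ l ∈ range i, ((r : K) + 1 - x + l)) *
        (∏ l ∈ range (N - i), (2 * (r : K) + 3 - 2 * x + i + l))) := by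
  have hf : ∀ l : ℕ, l + 1 < p → (l : K) + 1 ≠ 0 := by
    intro l hl
    have := castK_ne (K := K) hl (Fact.out : p.Prime).pos (Nat.succ_ne_zero l)
    simpa using this
  have q1 : ∏ l ∈ range r, ((l : K) - r) = (-1) ^ r * ∏ l ∈ range r, ((l : K) + 1) := by
    rw [← prod_range_reflect (fun l => (l : K) + 1)]
    have : ((-1 : K)) ^ r = ∏ l ∈ range r, (-1 : K) := by simp
    rw [this, ← prod_mul_distrib]
    refine prod_congr rfl fun l hl => ?_
    have hl' := mem_range.mp hl
    rw [show r - 1 - l = r - (l + 1) by omega, Nat.cast_sub (by omega)]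
    push_cast; ring
  have q2 : ∏ l ∈ range i, ((r : K) + 1 + l)
      = (N.choose i : K) * (∏ l ∈ range i, ((l : K) + 1)) * (-1) ^ i := by
    have e1 : (∏ l ∈ range i, ((l : K) + 1)) = (i.factorial : K) := by
      rw [← prod_range_add_one_eq_factorial]; push_cast; rfl
    rw [e1, mul_comm (N.choose i : K), ← Nat.cast_mul, ← Nat.descFactorial_eq_factorial_mul_choose,
      Nat.descFactorial_eq_prod_range]
    have : ((-1 : K)) ^ i = ∏ l ∈ range i, (-1 : K) := by simp
    rw [this, Nat.cast_prod, ← prod_mul_distrib]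
    refine prod_congr rfl fun l hl => ?_
    have hl' := mem_range.mp hl
    have hpK : ((r + N + 1 : ℕ) : K) = 0 := by rw [hN]; exact CharP.cast_eq_zero K p
    rw [Nat.cast_sub (by omega)]
    push_cast at hpK
    linear_combination hpK
  have q3 : Tm x r (r + i) = ((∏ l ∈ range r, ((l : K) + 1)) * (∏ l ∈ range i, ((r : K) + 1 + l)) *
      ((∏ l ∈ range r, ((l : K) + 1 - x)) * (∏ l ∈ range i, ((r : K) + 1 - x + l)))) *
      (((∏ l ∈ range r, ((l : K) - r)) * (∏ l ∈ range r, ((l : K) + r + 2 - 2 * x))) *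
       ((∏ l ∈ range i, ((l : K) + 1)) * (∏ l ∈ range i, (2 * (r : K) + 3 - 2 * x + l))))⁻¹ := by
    rw [Tm, prod_erase_split, prod_mul_distrib, prod_range_add, prod_range_add, mul_inv,
      ← prod_mul_distrib, ← prod_mul_distrib, ← prod_inv_distrib, ← prod_inv_distrib]
    congr 1
    · congr 1
      · congr 1
        exact prod_congr rfl fun l _ => by push_cast; ring
      · congr 1
        exact prod_congr rfl fun l _ => by push_cast; ring
    · congr 1
      · exact prod_congr rfl fun l _ => by congr 1; ring
      · exact prod_congr rfl fun l _ => by congr 1; push_cast; ring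
  have q4 : ∏ l ∈ (range (r + N + 1)).erase r, ((l : K) + r + 2 - 2 * x)
      = (∏ l ∈ range r, ((l : K) + r + 2 - 2 * x)) * ((∏ l ∈ range i, (2 * (r : K) + 3 - 2 * x + l)) *
        (∏ l ∈ range (N - i), (2 * (r : K) + 3 - 2 * x + i + l))) := by
    rw [prod_erase_split]
    congr 1
    have : range N = range (i + (N - i)) := by congr 1; omega
    rw [this, prod_range_add]
    congr 1
    · exact prod_congr rfl fun l _ => by push_cast; ring
    · exact prod_congr rfl fun l _ => by push_cast; ring
  rw [q3, q4, q1, q2]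
  have n1 : (∏ l ∈ range r, ((l : K) + 1)) ≠ 0 :=
    prod_ne_zero_iff.mpr fun l hl => hf l (by have := mem_range.mp hl; omega)
  have n2 : (∏ l ∈ range i, ((l : K) + 1)) ≠ 0 :=
    prod_ne_zero_iff.mpr fun l hl => hf l (by have := mem_range.mp hl; omega)
  have n3 : (∏ l ∈ range r, ((l : K) + r + 2 - 2 * x)) ≠ 0 :=
    prod_ne_zero_iff.mpr fun l hl => by have := hx2 (l + r + 2); push_cast at this; exact this
  have n4 : (∏ l ∈ range i, (2 * (r : K) + 3 - 2 * x + l)) ≠ 0 :=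
    prod_ne_zero_iff.mpr fun l hl => by
      have := hx2 (2 * r + 3 + l); push_cast at this; convert this using 1; ring
  have n5 : ((-1 : K)) ^ r ≠ 0 := by simp
  have n6 : ((-1 : K)) ^ r * (-1) ^ r = 1 := by rw [← mul_pow]; simp
  generalize ((-1 : K)) ^ r = u at *
  clear q1 q2 q3 q4
  generalize (∏ l ∈ range r, ((l : K) + 1)) = A1 at *
  generalize (∏ l ∈ range i, ((l : K) + 1)) = A2 at *
  generalize (∏ l ∈ range r, ((l : K) + r + 2 - 2 * x)) = A3 at *
  generalize (∏ l ∈ range i, (2 * (r : K) + 3 - 2 * x + l)) = A4 at *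
  generalize (∏ l ∈ range r, ((l : K) + 1 - x)) = A5 at *
  generalize (∏ l ∈ range i, ((r : K) + 1 - x + l)) = A6 at *
  generalize (∏ l ∈ range (N - i), (2 * (r : K) + 3 - 2 * x + i + l)) = A7 at *
  generalize ((-1 : K)) ^ i = w at *
  field_simp
  linear_combination (- A5 * A6 * A7 * w * (N.choose i : K)) * n6

lemma coef_eq (hp2 : p ≠ 2) (x : K) (hx1 : ∀ l : ℕ, (l : K) - x ≠ 0)
    (hx2 : ∀ l : ℕ, (l : K) - 2 * x ≠ 0) (r : ℕ) (hr : r < p - 1) :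
    x * ∑ i ∈ range (p - 1 - r), Tm x r (r + i) = x * (-1) ^ r + (r + 1 - x) := by
  have hp : p.Prime := Fact.out
  obtain ⟨N, hN⟩ : ∃ N, r + N + 1 = p := ⟨p - 1 - r, by omega⟩
  rw [show p - 1 - r = N by omega]
  set Q := ∏ l ∈ (range (r + N + 1)).erase r, ((l : K) + r + 2 - 2 * x) with hQ
  have hpK : ((r + N + 1 : ℕ) : K) = 0 := by rw [hN]; exact CharP.cast_eq_zero K p
  push_cast at hpK
  have h2 : (2 : K) ≠ 0 := by
    have := castK_ne (K := K) (p := p) (a := 2) (b := 0) (by have := hp.two_le; omega) hp.pos (by omega)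
    simpa using this
  set f := x - x ^ p with hf
  have hfx : ∏ l ∈ range p, ((l : K) + 1 - x) = f := prodf x
  have hf0 : f ≠ 0 := by
    rw [← hfx]
    exact prod_ne_zero_iff.mpr fun l _ => by have := hx1 (l + 1); push_cast at this; exact this
  have hrp : range p = range (r + N + 1) := by rw [hN]
  have hrx : (r : K) + 1 - x ≠ 0 := by have := hx1 (r + 1); push_cast at this; exact this
  have hx0 : x ≠ 0 := by have := hx1 0; simpa using this
  have hQf : Q * (r + 1 - x) = f := by
    apply mul_left_cancel₀ h2
    have h := prodf (p := p) (2 * x - r - 1)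
    rw [hrp, ← mul_prod_erase _ _ (show r ∈ range (r + N + 1) from mem_range.mpr (by omega))] at h
    have e1 : ∏ l ∈ (range (r + N + 1)).erase r, ((l : K) + 1 - (2 * x - r - 1)) = Q :=
      prod_congr rfl fun l _ => by ring
    rw [e1] at h
    have : ExpChar K p := ExpChar.prime hp
    have cp : ∀ m : ℕ, (m : K) ^ p = m := fun m => by
      have := congrArg (ZMod.castHom (dvd_refl p) K) (ZMod.pow_card (m : ZMod p))
      rwa [map_pow, map_natCast] at this
    have c2 : (2 : K) ^ p = 2 := by exact_mod_cast cp 2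
    rw [sub_pow_char, sub_pow_char, mul_pow, c2, cp, one_pow] at h
    rw [hf]
    linear_combination h
  have hQ0 : Q ≠ 0 := by rintro h; rw [h, zero_mul] at hQf; exact hf0 hQf.symm
  have htot : (∑ i ∈ range (N + 1), Tm x r (r + i)) = (-1) ^ r := by
    apply mul_right_cancel₀ hQ0
    apply mul_right_cancel₀ hrx
    rw [sum_mul, sum_congr rfl fun i hi =>
      Tm_mul x hx2 r i N hN (by have := mem_range.mp hi; omega), ← mul_sum, chuV, mul_assoc _ Q, hQf,
      ← hfx, hrp, ← mul_prod_erase _ _ (show r ∈ range (r + N + 1) from mem_range.mpr (by omega)), prod_erase_split]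
    rw [prod_congr rfl (fun (l : ℕ) _ => show (2 * (r : K) + 3 - 2 * x - (r + 1 - x) + l)
      = (((r + 1 + l : ℕ) : K) + 1 - x) by push_cast; ring)]
    ring
  have hlast : Tm x r (r + N) * x = - (r + 1 - x) := by
    apply mul_right_cancel₀ hQ0
    have h := Tm_mul x hx2 r N N hN le_rfl
    rw [← hQ] at h
    have h3 : ((-1 : K)) ^ r * (-1) ^ N = 1 := by
      rw [← pow_add]
      have : Even (r + N) := by
        have := hp.odd_of_ne_two hp2
        rw [← hN] at this
        rcases Nat.even_or_odd (r + N) with h | h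
        · exact h
        · exact absurd this (by rw [Nat.not_odd_iff_even]; exact h.add_one)
      exact this.neg_one_pow
    have h4 : (∏ l ∈ range r, ((l : K) + 1 - x)) * (∏ l ∈ range N, ((r : K) + 1 - x + l)) * (-x) = f := by
      rw [← hfx, hrp, prod_range_succ, prod_range_add]
      congr 1
      · congr 1
        exact prod_congr rfl fun l _ => by push_cast; ring
      · push_cast; linear_combination -hpK
    simp only [Nat.choose_self, Nat.cast_one, one_mul, Nat.sub_self, range_zero, prod_empty, mul_one] at h
    linear_combination x * h - h4 + hQf +
      x * (∏ l ∈ range r, ((l : K) + 1 - x)) * (∏ l ∈ range N, ((r : K) + 1 - x + l)) * h3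
  rw [sum_range_succ] at htot
  linear_combination x * htot - hlast

lemma parfrac (s : Finset ℕ) (hs : s.Nonempty) (v : ℕ → K) (t : K) (hv : Set.InjOn v s)
    (ht : ∀ l ∈ s, v l - t ≠ 0) :
    ∏ l ∈ s, (v l - t)⁻¹ = ∑ r ∈ s, (v r - t)⁻¹ * ∏ l ∈ s.erase r, (v l - v r)⁻¹ := by
  have hv' : Set.InjOn (fun l => - v l) s := fun a ha b hb h => hv ha hb (neg_injective h)
  have h := congrArg (Polynomial.eval (-t)) (Lagrange.sum_basis hv' hs)
  rw [Polynomial.eval_finsetSum, Polynomial.eval_one] at h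
  rw [sum_congr rfl fun i hi => Lagrange.eval_basis_not_at_node hi (by
    intro e; apply ht i hi; linear_combination e)] at h
  rw [← mul_sum, Lagrange.eval_nodal] at h
  have e : ∏ i ∈ s, (-t - -v i) = ∏ i ∈ s, (v i - t) := prod_congr rfl fun i _ => by ring
  rw [e] at h
  rw [prod_inv_distrib, inv_eq_of_mul_eq_one_right h]
  refine sum_congr rfl fun r _ => ?_
  rw [Lagrange.nodalWeight, mul_comm]
  congr 1
  · congr 1; ring
  · exact prod_congr rfl fun l _ => by congr 1; ring

lemma key_id (hp2 : p ≠ 2) (x t : K) (hx1 : ∀ l : ℕ, (l : K) - x ≠ 0)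
    (hx2 : ∀ l : ℕ, (l : K) - 2 * x ≠ 0) (ht : ∀ l < p - 1, ((l : K) + 1 - x) ^ 2 - t ≠ 0) :
    x * ∑ m ∈ range (p - 1), (∏ l ∈ range m, ((l : K) + 1) * ((l : K) + 1 - x)) *
      ∏ l ∈ range (m + 1), (((l : K) + 1 - x) ^ 2 - t)⁻¹
    = ∑ r ∈ range (p - 1), (x * (-1) ^ r + (r + 1 - x)) * (((r : K) + 1 - x) ^ 2 - t)⁻¹ := by
  have hv : ∀ m < p - 1, Set.InjOn (fun l : ℕ => ((l : K) + 1 - x) ^ 2) (range (m + 1) : Finset ℕ) := by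
    intro m hm a ha b hb h
    have ha' : a < m + 1 := by simpa using ha
    have hb' : b < m + 1 := by simpa using hb
    by_contra hab
    have h1 := castK_ne (K := K) (p := p) (by omega) (by omega) hab
    have h2 := hx2 (a + b + 2)
    push_cast at h2
    have : ((a : K) - b) * ((a : K) + b + 2 - 2 * x) = 0 := by
      simp only at h
      linear_combination h
    rcases mul_eq_zero.mp this with h | h
    · exact h1 (sub_eq_zero.mp h)
    · exact h2 h
  have h1 : ∀ m ∈ range (p - 1), (∏ l ∈ range m, ((l : K) + 1) * ((l : K) + 1 - x)) *
      ∏ l ∈ range (m + 1), (((l : K) + 1 - x) ^ 2 - t)⁻¹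
      = ∑ r ∈ range (m + 1), (((r : K) + 1 - x) ^ 2 - t)⁻¹ * Tm x r m := by
    intro m hm
    have hm' := mem_range.mp hm
    rw [parfrac (range (m + 1)) ⟨0, by simp⟩ (fun l => ((l : K) + 1 - x) ^ 2) t (hv m hm')
      (fun l hl => ht l (by have := mem_range.mp hl; omega)), mul_sum]
    refine sum_congr rfl fun r _ => ?_
    rw [Tm]; ring
  rw [sum_congr rfl h1, sum_comm' (t' := range (p - 1)) (s' := fun r => Ico r (p - 1))
    (by intro a b; simp; omega), mul_sum]
  refine sum_congr rfl fun r hr => ?_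
  rw [← mul_sum, sum_Ico_eq_sum_range]
  rw [← coef_eq hp2 x hx1 hx2 r (mem_range.mp hr)]
  ring
end

section
open Finset

lemma comp_sum {M : Type*} [AddCommMonoid M] (f : List ℕ → M) (n : ℕ) :
    ∑ c : Composition (n + 1), f c.blocks =
      ∑ ij ∈ antidiagonal n, ∑ c : Composition ij.2, f ((ij.1 + 1) :: c.blocks) := by
  rw [sum_sigma']
  symm
  refine sum_bij (fun a ha => ⟨(a.1.1 + 1) :: a.2.blocks, ?_, ?_⟩) ?_ ?_ ?_ ?_
  · intro i hi
    rcases List.mem_cons.mp hi with h | h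
    · omega
    · exact a.2.blocks_pos h
  · have : a.1 ∈ antidiagonal n := by simpa using ha
    rw [HasAntidiagonal.mem_antidiagonal] at this
    simp; omega
  · simp
  · rintro ⟨⟨i, j⟩, c⟩ _ ⟨⟨i', j'⟩, c'⟩ _ h
    simp only [Composition.mk.injEq, List.cons.injEq, Nat.add_right_cancel_iff] at h
    obtain ⟨rfl, h⟩ := h
    have : j = j' := by
      have h1 := c.blocks_sum
      have h2 := c'.blocks_sum
      simp only at h1 h2
      rw [← h1, ← h2, h]
    subst this
    have : c = c' := Composition.ext h
    rw [this]
  · rintro ⟨bl, hpos, hsum⟩ _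
    cases bl with
    | nil => simp at hsum
    | cons a l =>
      have ha : 0 < a := hpos (by simp)
      simp only [List.sum_cons] at hsum
      refine ⟨⟨(a - 1, l.sum), ⟨l, fun h => hpos (List.mem_cons_of_mem _ h), rfl⟩⟩, ?_, ?_⟩
      · simp; omega
      · apply Composition.ext
        have : a - 1 + 1 = a := by omega
        simp [this]
  · intros; rfl

variable (p : ℕ) [Fact p.Prime]

/-- height -/
def ht (l : List ℕ) : ℕ := (l.filter fun x => 2 ≤ x).length

open Polynomial in
/-- weight polynomials -/
noncomputable def gg (N n : ℕ) : (ZMod p)[X] :=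
  ∑ c : Composition n, C (HstarAux p N c.blocks) * X ^ (2 * ht c.blocks)

/-- generating function -/
noncomputable def Ga (N : ℕ) : PowerSeries (Polynomial (ZMod p)) := PowerSeries.mk (gg p N)

/-- tail block weights -/
noncomputable def W2 (m : ℕ) : PowerSeries (Polynomial (ZMod p)) :=
  PowerSeries.mk fun i => if 2 ≤ i then Polynomial.C ((m : ZMod p)⁻¹ ^ i) * Polynomial.X ^ 2 else 0

/-- block weights -/
noncomputable def W1 (m : ℕ) : PowerSeries (Polynomial (ZMod p)) :=
  PowerSeries.mk fun i => if i = 0 then 0 else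
    Polynomial.C ((m : ZMod p)⁻¹ ^ i) * Polynomial.X ^ (if 2 ≤ i then 2 else 0)

lemma ht_cons (i : ℕ) (l : List ℕ) : ht (i :: l) = (if 2 ≤ i then 1 else 0) + ht l := by
  unfold ht
  by_cases h : 2 ≤ i
  · simp [h]; omega
  · simp [h]

lemma gg_zero (N : ℕ) : gg p N 0 = 1 := by
  unfold gg
  have hb : ∀ c : Composition 0, c.blocks = [] := by
    intro c
    rw [Composition.blocks_eq_nil]
  have : ∀ c : Composition 0, c = ⟨[], by simp, by simp⟩ := fun c => Composition.ext (hb c)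
  rw [Fintype.sum_eq_single (⟨[], by simp, by simp⟩ : Composition 0) (fun c hc => absurd (this c) hc)]
  simp [HstarAux, ht]

lemma Ga_rec (N : ℕ) : Ga p N = 1 + ∑ m ∈ Ioo 0 N, W1 p m * Ga p (m + 1) := by
  ext1 n
  rw [map_add, map_sum]
  simp only [PowerSeries.coeff_mul]
  cases n with
  | zero => simp [Ga, gg_zero, W1]
  | succ n =>
    simp only [PowerSeries.coeff_one, Nat.succ_ne_zero, if_false, zero_add]
    simp only [Finset.Nat.antidiagonal_succ, sum_cons, sum_map]
    simp only [Ga, W1, PowerSeries.coeff_mk, if_true, zero_mul, zero_add]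
    rw [gg, comp_sum (fun l => Polynomial.C (HstarAux p N l) * Polynomial.X ^ (2 * ht l)), sum_comm]
    refine sum_congr rfl fun ij _ => ?_
    simp only [Function.Embedding.prodMap, Function.Embedding.coeFn_mk, Prod.map,
      Function.Embedding.refl_apply, Nat.succ_eq_add_one, Nat.succ_ne_zero, if_false, gg, mul_sum]
    rw [sum_comm]
    refine sum_congr rfl fun c _ => ?_
    rw [HstarAux, map_sum, sum_mul]
    refine sum_congr rfl fun m _ => ?_
    rw [ht_cons, map_mul]
    split_ifs <;> ring

lemma W2_coeff (k : ℕ) : PowerSeries.coeff (k + 1) (∑ m ∈ Ioo 0 p, W2 p m * Ga p (m + 1)) =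
    ∑ c : Composition (k + 1), if 2 ≤ c.blocks.headI then
      Polynomial.C (Hps p c.blocks) * Polynomial.X ^ (2 * ht c.blocks) else 0 := by
  rw [map_sum]
  simp only [PowerSeries.coeff_mul]
  simp only [Finset.Nat.antidiagonal_succ, sum_cons, sum_map]
  simp only [Ga, W2, PowerSeries.coeff_mk]
  rw [comp_sum (fun l => if 2 ≤ l.headI then
      Polynomial.C (Hps p l) * Polynomial.X ^ (2 * ht l) else 0)]
  simp only [show ¬ (2 ≤ 0) by omega, if_false, zero_mul, zero_add]
  rw [sum_comm]
  refine sum_congr rfl fun ij _ => ?_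
  simp only [Function.Embedding.prodMap, Function.Embedding.coeFn_mk, Prod.map,
      Function.Embedding.refl_apply, Nat.succ_eq_add_one, gg, mul_sum]
  rw [sum_comm]
  refine sum_congr rfl fun c _ => ?_
  simp only [List.headI_cons, Hps]
  by_cases h : 2 ≤ ij.1 + 1
  · simp only [h, if_true]
    rw [HstarAux, map_sum, sum_mul]
    refine sum_congr rfl fun m _ => ?_
    rw [ht_cons, map_mul, if_pos h]
    ring
  · simp [h]

lemma Izero_coeff (k s : ℕ) : ∑ c ∈ Izero (k + 1) s, Hps p c.blocks =
    Polynomial.coeff (PowerSeries.coeff (k + 1) (∑ m ∈ Ioo 0 p, W2 p m * Ga p (m + 1))) (2 * s) := by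
  rw [W2_coeff, Polynomial.finsetSum_coeff, Izero, sum_filter]
  refine sum_congr rfl fun c _ => ?_
  by_cases h : 2 ≤ c.blocks.headI
  · simp only [h, if_true, true_and, Polynomial.coeff_C_mul, Polynomial.coeff_X_pow]
    change (if ht c.blocks = s then _ else _) = _
    by_cases h2 : ht c.blocks = s
    · simp [h2]
    · have : ¬ (2 * s = 2 * ht c.blocks) := by omega
      simp [h2, this]
  · simp [h]

local notation "xx" => (PowerSeries.X : PowerSeries (Polynomial (ZMod p)))
local notation "zz" => (PowerSeries.C (Polynomial.X : Polynomial (ZMod p)))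

lemma cast_A (m : ℕ) : (m : PowerSeries (Polynomial (ZMod p))) =
    PowerSeries.C (Polynomial.C (m : ZMod p)) := by simp

lemma W2_eq (m : ℕ) (hm : (m : ZMod p) ≠ 0) :
    W2 p m * ((m : PowerSeries (Polynomial (ZMod p))) * (m - xx)) = (zz * xx) ^ 2 := by
  have h1 : W2 p m * (m - xx) = PowerSeries.C (Polynomial.C (m : ZMod p)⁻¹) * zz ^ 2 * xx ^ 2 := by
    ext1 n
    rw [mul_sub, map_sub, mul_comm (W2 p m), cast_A, PowerSeries.coeff_C_mul, ← map_pow, ← map_mul,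
      PowerSeries.coeff_C_mul, PowerSeries.coeff_X_pow]
    rcases n with _ | _ | _ | n
    · simp [W2]
    · rw [PowerSeries.coeff_succ_mul_X]; simp [W2]
    · rw [PowerSeries.coeff_succ_mul_X]
      simp [W2]
      rw [← mul_assoc, ← Polynomial.C_eq_natCast, ← map_mul]
      congr 2
      field_simp
    · rw [PowerSeries.coeff_succ_mul_X]
      simp [W2]
      rw [← mul_assoc, ← Polynomial.C_eq_natCast, ← map_mul, sub_eq_zero]
      congr 2
      field_simp
      ring
  have h2 : (m : PowerSeries (Polynomial (ZMod p))) * PowerSeries.C (Polynomial.C (m : ZMod p)⁻¹) = 1 := by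
    rw [cast_A, ← map_mul, ← map_mul, mul_inv_cancel₀ hm]; simp
  linear_combination (m : PowerSeries (Polynomial (ZMod p))) * h1 + zz ^ 2 * xx ^ 2 * h2

lemma W1_eq (m : ℕ) (hm : (m : ZMod p) ≠ 0) :
    (1 - W1 p m) * ((m : PowerSeries (Polynomial (ZMod p))) * (m - xx))
      = (m - xx) ^ 2 - (zz * xx) ^ 2 := by
  have h0 : W1 p m = PowerSeries.C (Polynomial.C (m : ZMod p)⁻¹) * xx + W2 p m := by
    ext1 n
    rw [map_add, PowerSeries.coeff_C_mul, PowerSeries.coeff_X]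
    rcases n with _ | _ | n <;> simp [W1, W2]
  have h2 : (m : PowerSeries (Polynomial (ZMod p))) * PowerSeries.C (Polynomial.C (m : ZMod p)⁻¹) = 1 := by
    rw [cast_A, ← map_mul, ← map_mul, mul_inv_cancel₀ hm]; simp
  rw [h0]
  linear_combination - W2_eq p m hm - (m - xx) * xx * h2

lemma Ga_one : Ga p 1 = 1 := by
  rw [Ga_rec, show Ioo 0 1 = (∅ : Finset ℕ) by ext a; simp; omega]; simp

lemma Ga_succ (m : ℕ) (hm : 0 < m) : Ga p (m + 1) * (1 - W1 p m) = Ga p m := by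
  have h1 := Ga_rec p (m + 1)
  rw [show Ioo 0 (m + 1) = insert m (Ioo 0 m) by ext a; simp; omega, sum_insert (by simp)] at h1
  linear_combination h1 - Ga_rec p m

/-- geometric series -/
noncomputable def Iv (e : Polynomial (ZMod p)) (n : ℕ) : PowerSeries (Polynomial (ZMod p)) :=
  PowerSeries.mk fun i => Polynomial.C ((n : ZMod p)⁻¹ ^ (i + 1)) * e ^ i

lemma Iv_mul (e : Polynomial (ZMod p)) (n : ℕ) (hn : (n : ZMod p) ≠ 0) :
    Iv p e n * (n - PowerSeries.C e * xx) = 1 := by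
  ext1 i
  rw [mul_sub, map_sub, mul_comm (Iv p e n), cast_A, PowerSeries.coeff_C_mul, PowerSeries.coeff_one,
    mul_comm _ (PowerSeries.C e * xx), mul_assoc, PowerSeries.coeff_C_mul, mul_comm xx]
  rcases i with _ | i
  · simp only [Iv, PowerSeries.coeff_mk, PowerSeries.coeff_zero_mul_X, pow_zero, zero_add, mul_one,
      pow_one, mul_zero, sub_zero, if_true]
    rw [← map_mul, mul_inv_cancel₀ hn, map_one]
  · rw [PowerSeries.coeff_succ_mul_X]
    simp only [Iv, PowerSeries.coeff_mk, Nat.succ_ne_zero, if_false]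
    rw [← mul_assoc, ← map_mul, pow_succ' _ (i + 1), ← mul_assoc, mul_inv_cancel₀ hn]
    ring

lemma sum_range_zmod (f : ZMod p → ZMod p) : ∑ l ∈ range p, f (l : ZMod p) = ∑ a : ZMod p, f a := by
  refine sum_bij (fun l _ => (l : ZMod p)) (by simp) ?_ ?_ ?_
  · intro a ha b hb hab
    rw [ZMod.natCast_eq_natCast_iff] at hab
    exact Nat.ModEq.eq_of_lt_of_lt hab (by simpa using ha) (by simpa using hb)
  · intro b _
    exact ⟨b.val, by simpa using ZMod.val_lt _, by simp⟩
  · intros; rfl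

lemma pow_sum_zero (k : ℕ) (hk : 0 < k) (hp : k < p - 1) :
    ∑ r ∈ range (p - 1), ((r + 1 : ℕ) : ZMod p)⁻¹ ^ k = 0 := by
  have h1 := FiniteField.sum_pow_lt_card_sub_one (ZMod p) (p - 1 - k) (by rw [ZMod.card]; omega)
  rw [← sum_range_zmod p (fun a => a ^ (p - 1 - k))] at h1
  have hr : range p = range ((p - 1) + 1) := by congr 1; omega
  rw [hr, sum_range_succ'] at h1
  have : p - 1 - k ≠ 0 := by omega
  simp only [Nat.cast_zero, zero_pow this, add_zero] at h1
  rw [← h1]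
  refine sum_congr rfl fun n hn => ?_
  have hn' := mem_range.mp hn
  have hne : ((n + 1 : ℕ) : ZMod p) ≠ 0 := nat_ne (by omega) (by omega)
  rw [pow_sub₀ _ hne (by omega), ZMod.pow_card_sub_one_eq_one hne, one_mul, inv_pow]

lemma main_id_aux {K : Type*} [Field K] [CharP K p] (φ : PowerSeries (Polynomial (ZMod p)) →+* K)
    (hφ : Function.Injective φ) (hp2 : p ≠ 2) :
    2 * xx * (∑ m ∈ Ioo 0 p, W2 p m * Ga p (m + 1)) =
      ∑ r ∈ range (p - 1), ((-1) ^ r * xx * (xx * zz) *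
        (Iv p (1 + Polynomial.X) (r + 1) - Iv p (1 - Polynomial.X) (r + 1)) +
        (zz * xx) ^ 2 * (Iv p (1 + Polynomial.X) (r + 1) + Iv p (1 - Polynomial.X) (r + 1))) := by
  have hp : p.Prime := Fact.out
  apply hφ
  set x : K := φ xx with hx
  set z : K := φ zz with hz
  have hne : ∀ a : PowerSeries (Polynomial (ZMod p)), a ≠ 0 → φ a ≠ 0 := fun a ha h => ha (hφ (by rw [h, map_zero]))
  have hnm : ∀ l < p - 1, ((l + 1 : ℕ) : ZMod p) ≠ 0 := fun l hl => nat_ne (by omega) (by omega)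
  have hx1 : ∀ l : ℕ, (l : K) - x ≠ 0 := by
    intro l
    have := hne ((l : PowerSeries (Polynomial (ZMod p))) - xx) (by
      intro h
      have := congrArg (PowerSeries.coeff 1) h
      rw [cast_A, map_sub, PowerSeries.coeff_C, PowerSeries.coeff_one_X] at this
      simp at this)
    rwa [map_sub, map_natCast] at this
  have h2 : (2 : ZMod p) ≠ 0 := by
    exact_mod_cast nat_ne (p := p) (n := 2) (by omega) (by have := hp.two_le; omega)
  have hx2 : ∀ l : ℕ, (l : K) - 2 * x ≠ 0 := by
    intro l
    have := hne ((l : PowerSeries (Polynomial (ZMod p))) - ((2 : ℕ) : PowerSeries (Polynomial (ZMod p))) * xx) (by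
      intro h
      have := congrArg (PowerSeries.coeff 1) h
      rw [cast_A, cast_A, map_sub, PowerSeries.coeff_C, PowerSeries.coeff_C_mul,
        PowerSeries.coeff_one_X, mul_one] at this
      simp only [one_ne_zero, if_false, zero_sub, map_zero, neg_eq_zero] at this
      rw [Polynomial.C_eq_zero] at this
      exact h2 (by exact_mod_cast this))
    rw [map_sub, map_natCast, map_mul, map_natCast] at this
    exact_mod_cast this
  have ht : ∀ l < p - 1, ((l : K) + 1 - x) ^ 2 - (z * x) ^ 2 ≠ 0 := by
    intro l hl
    have := hne ((((l + 1 : ℕ) : PowerSeries (Polynomial (ZMod p))) - xx) ^ 2 - (zz * xx) ^ 2) (by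
      intro h
      have := congrArg (PowerSeries.constantCoeff) h
      rw [cast_A] at this
      simp only [map_sub, map_pow, map_mul, PowerSeries.constantCoeff_X, map_zero, mul_zero, sub_zero,
        PowerSeries.constantCoeff_C] at this
      rw [zero_pow two_ne_zero, sub_zero] at this
      have h3 := pow_eq_zero_iff (two_ne_zero) |>.mp this
      rw [Polynomial.C_eq_zero] at h3
      exact hnm l hl h3)
    rw [map_sub, map_pow, map_sub, map_natCast, map_pow, map_mul] at this
    push_cast at this
    exact this
  have hl1 : ∀ l < p - 1, (l : K) + 1 ≠ 0 := by
    intro l hl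
    have := castK_ne (K := K) (p := p) (a := l + 1) (b := 0) (by omega) hp.pos (by omega)
    simpa using this
  have hlx : ∀ l : ℕ, (l : K) + 1 - x ≠ 0 := fun l => by
    have := hx1 (l + 1); push_cast at this; exact this
  have hG : ∀ m, m ≤ p - 1 → φ (Ga p (m + 1)) =
      (∏ l ∈ range m, ((l : K) + 1) * ((l : K) + 1 - x)) *
        ∏ l ∈ range m, (((l : K) + 1 - x) ^ 2 - (z * x) ^ 2)⁻¹ := by
    intro m
    induction m with
    | zero => intro _; simp [Ga_one]
    | succ m ih =>
      intro hm
      rw [prod_range_succ, prod_range_succ]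
      have h1 := congrArg φ (Ga_succ p (m + 1) (by omega))
      have h3 := congrArg φ (W1_eq p (m + 1) (hnm m (by omega)))
      rw [map_mul, ih (by omega)] at h1
      simp only [map_mul, map_sub, map_pow, map_natCast] at h3
      rw [← hx, ← hz] at h3
      push_cast at h3
      have h4 := ht m (by omega)
      rw [map_sub] at h1
      generalize (∏ l ∈ range m, ((l : K) + 1) * ((l : K) + 1 - x)) = P at *
      generalize (∏ l ∈ range m, (((l : K) + 1 - x) ^ 2 - (z * x) ^ 2)⁻¹) = P' at *
      apply mul_right_cancel₀ h4
      rw [mul_assoc, mul_assoc, mul_assoc, mul_assoc P', inv_mul_cancel₀ h4]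
      linear_combination - (φ (Ga p (m + 1 + 1))) * h3 + ((m : K) + 1) * (m + 1 - x) * h1
  have hW : ∀ m < p - 1, φ (W2 p (m + 1)) * (((m : K) + 1) * (m + 1 - x)) = (z * x) ^ 2 := by
    intro m hm
    have h3 := congrArg φ (W2_eq p (m + 1) (hnm m (by omega)))
    simp only [map_mul, map_sub, map_pow, map_natCast] at h3
    push_cast at h3
    rw [← hx, ← hz] at h3
    exact h3
  have hF : φ (∑ m ∈ Ioo 0 p, W2 p m * Ga p (m + 1)) = (z * x) ^ 2 *
      ∑ m ∈ range (p - 1), (∏ l ∈ range m, ((l : K) + 1) * ((l : K) + 1 - x)) *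
      ∏ l ∈ range (m + 1), (((l : K) + 1 - x) ^ 2 - (z * x) ^ 2)⁻¹ := by
    rw [show Ioo 0 p = Ico 1 p by ext a; simp; omega, sum_Ico_eq_sum_range, map_sum, mul_sum]
    refine sum_congr rfl fun m hm => ?_
    have hm' := mem_range.mp hm
    rw [map_mul, add_comm 1 m, hG (m + 1) (by omega), ← hW m hm', prod_range_succ _ m]
    ring
  have hI1 : ∀ r < p - 1, (((r : K) + 1 - x) ^ 2 - (z * x) ^ 2) *
      (φ (Iv p (1 + Polynomial.X) (r + 1)) - φ (Iv p (1 - Polynomial.X) (r + 1))) = 2 * (z * x) ∧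
      (((r : K) + 1 - x) ^ 2 - (z * x) ^ 2) *
      (φ (Iv p (1 + Polynomial.X) (r + 1)) + φ (Iv p (1 - Polynomial.X) (r + 1)))
        = 2 * ((r : K) + 1 - x) := by
    intro r hr
    have e1 := congrArg φ (Iv_mul p (1 + Polynomial.X) (r + 1) (hnm r hr))
    have e2 := congrArg φ (Iv_mul p (1 - Polynomial.X) (r + 1) (hnm r hr))
    simp only [map_mul, map_sub, map_add, map_one, map_natCast] at e1 e2
    rw [← hx, ← hz] at e1 e2
    push_cast at e1 e2
    constructor
    · linear_combination ((r : K) + 1 - (1 - z) * x) * e1 - ((r : K) + 1 - (1 + z) * x) * e2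
    · linear_combination ((r : K) + 1 - (1 - z) * x) * e1 + ((r : K) + 1 - (1 + z) * x) * e2
  have hkey := key_id (p := p) hp2 x ((z * x) ^ 2) hx1 hx2 ht
  rw [map_mul, map_mul, hF, ← hx, map_ofNat]
  have : ∀ S : K, 2 * x * ((z * x) ^ 2 * S) = 2 * (z * x) ^ 2 * (x * S) := fun S => by ring
  rw [this, hkey, mul_sum, map_sum]
  refine sum_congr rfl fun r hr => ?_
  have hr' := mem_range.mp hr
  obtain ⟨i1, i2⟩ := hI1 r hr'
  have h4 := ht r hr'
  simp only [map_mul, map_sub, map_add, map_pow, map_neg, map_one]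
  rw [← hx, ← hz]
  apply mul_right_cancel₀ h4
  have h5 := inv_mul_cancel₀ h4
  linear_combination 2 * (z * x) ^ 2 * (x * (-1) ^ r + ((r : K) + 1 - x)) * h5 - (-1) ^ r * x * (x * z) * i1 - (z * x) ^ 2 * i2

lemma main_id (hp2 : p ≠ 2) :
    2 * xx * (∑ m ∈ Ioo 0 p, W2 p m * Ga p (m + 1)) =
      ∑ r ∈ range (p - 1), ((-1) ^ r * xx * (xx * zz) *
        (Iv p (1 + Polynomial.X) (r + 1) - Iv p (1 - Polynomial.X) (r + 1)) +
        (zz * xx) ^ 2 * (Iv p (1 + Polynomial.X) (r + 1) + Iv p (1 - Polynomial.X) (r + 1))) := by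
  haveI : CharP (FractionRing (PowerSeries (Polynomial (ZMod p)))) p :=
    charP_of_injective_ringHom
      (f := (algebraMap (PowerSeries (Polynomial (ZMod p)))
        (FractionRing (PowerSeries (Polynomial (ZMod p))))).comp
          (PowerSeries.C.comp (Polynomial.C (R := ZMod p))))
      (RingHom.injective _) p
  exact main_id_aux p (algebraMap (PowerSeries (Polynomial (ZMod p)))
    (FractionRing (PowerSeries (Polynomial (ZMod p))))) (IsFractionRing.injective _ _) hp2

lemma coeff_one_sub (j i : ℕ) :
    ((1 - Polynomial.X : Polynomial (ZMod p)) ^ j).coeff i = (-1) ^ i * (j.choose i : ZMod p) := by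
  have : (1 - Polynomial.X : Polynomial (ZMod p)) ^ j
      = ((1 + Polynomial.X : Polynomial (ZMod p)) ^ j).comp (Polynomial.C (-1) * Polynomial.X) := by
    simp [sub_eq_add_neg]
  rw [this, Polynomial.comp_C_mul_X_coeff, Polynomial.coeff_one_add_X_pow, mul_comm]

lemma main_sum (j s : ℕ) (hs : 1 ≤ s) (hp : j + 3 < p) :
    ∑ c ∈ Izero (j + 1) s, Hps p c.blocks =
      (j.choose (2 * s - 1) : ZMod p) *
        ∑ n ∈ range (p - 1), (-1) ^ n * ((n + 1 : ℕ) : ZMod p)⁻¹ ^ (j + 1) := by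
  rw [Izero_coeff]
  have h := congrArg (PowerSeries.coeff (j + 2)) (main_id p (by omega))
  set F := ∑ m ∈ Ioo 0 p, W2 p m * Ga p (m + 1)
  clear_value F
  have h2 : (2 : ZMod p) ≠ 0 := by exact_mod_cast nat_ne (p := p) (n := 2) (by omega) (by omega)
  have e2 : (2 : PowerSeries (Polynomial (ZMod p))) = PowerSeries.C (Polynomial.C 2) := by
    rw [map_ofNat, map_ofNat]
  rw [mul_assoc, mul_comm xx, e2, PowerSeries.coeff_C_mul, PowerSeries.coeff_succ_mul_X, map_sum] at h
  have h3 : ∀ r ∈ range (p - 1), PowerSeries.coeff (j + 2) ((-1) ^ r * xx * (xx * zz) *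
        (Iv p (1 + Polynomial.X) (r + 1) - Iv p (1 - Polynomial.X) (r + 1)) +
        (zz * xx) ^ 2 * (Iv p (1 + Polynomial.X) (r + 1) + Iv p (1 - Polynomial.X) (r + 1)))
      = Polynomial.C ((-1) ^ r * ((r + 1 : ℕ) : ZMod p)⁻¹ ^ (j + 1)) * (Polynomial.X *
          ((1 + Polynomial.X) ^ j - (1 - Polynomial.X) ^ j)) +
        Polynomial.C (((r + 1 : ℕ) : ZMod p)⁻¹ ^ (j + 1)) * (Polynomial.X ^ 2 *
          ((1 + Polynomial.X) ^ j + (1 - Polynomial.X) ^ j)) := by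
    intro r _
    have e3 : (-1 : PowerSeries (Polynomial (ZMod p))) ^ r
        = PowerSeries.C (Polynomial.C ((-1) ^ r)) := by simp
    have e4 : ∀ U V : PowerSeries (Polynomial (ZMod p)),
        (-1) ^ r * xx * (xx * zz) * U + (zz * xx) ^ 2 * V =
        PowerSeries.C (Polynomial.C ((-1) ^ r) * Polynomial.X) * (U * xx * xx) +
          PowerSeries.C (Polynomial.X ^ 2) * (V * xx * xx) := by
      intro U V
      have e6 : PowerSeries.C ((Polynomial.X : Polynomial (ZMod p)) ^ 2) = zz ^ 2 := map_pow _ _ _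
      have e7 : PowerSeries.C (Polynomial.C ((-1 : ZMod p) ^ r) * Polynomial.X)
        = PowerSeries.C (Polynomial.C ((-1) ^ r)) * zz := map_mul _ _ _
      rw [e3, e6, e7]; ring
    rw [e4, map_add, PowerSeries.coeff_C_mul, PowerSeries.coeff_C_mul, PowerSeries.coeff_succ_mul_X,
      PowerSeries.coeff_succ_mul_X, PowerSeries.coeff_succ_mul_X, PowerSeries.coeff_succ_mul_X,
      map_sub, map_add]
    simp only [Iv, PowerSeries.coeff_mk]
    rw [map_mul]
    ring
  rw [sum_congr rfl h3, sum_add_distrib, ← sum_mul, ← sum_mul, ← map_sum, ← map_sum,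
    pow_sum_zero p (j + 1) (by omega) (by omega), map_zero, zero_mul, add_zero] at h
  have h4 := congrArg (fun q => Polynomial.coeff q (2 * s)) h
  simp only [Polynomial.coeff_C_mul] at h4
  obtain ⟨u, rfl⟩ : ∃ u, s = u + 1 := ⟨s - 1, by omega⟩
  rw [show 2 * (u + 1) = (2 * u + 1) + 1 by ring] at h4 ⊢
  rw [Polynomial.coeff_X_mul, Polynomial.coeff_sub, coeff_one_sub, Polynomial.coeff_one_add_X_pow] at h4
  have e5 : ((-1 : ZMod p)) ^ (2 * u + 1) = -1 := by rw [pow_succ, pow_mul]; simp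
  rw [e5] at h4
  apply mul_left_cancel₀ h2
  rw [h4, Nat.add_sub_cancel]
  ring

end

end AO

/-- Finite analogue of the Aoki–Ohno relation:
`∑_{𝐤 ∈ I₀(k,s)} H_p^⋆(𝐤) ≡ 2 binom(k-1,2s-1)(1-2^{1-k}) B_{p-k}/k (mod p)`. -/
theorem stmt_12 (k s : ℕ) (hk : 2 ≤ k) (hs : 1 ≤ s) (hks : 2 * s ≤ k)
    (p : ℕ) [Fact p.Prime] (hp : k + 2 < p) :
    ∑ c ∈ Izero k s, Hps p c.blocks =
      2 * ((k - 1).choose (2 * s - 1) : ZMod p) * (1 - (2 : ZMod p) ^ ((1 : ℤ) - k)) *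
        ((bernoulli (p - k) / k : ℚ) : ZMod p) := by

  obtain ⟨j, rfl⟩ : ∃ j, k = j + 1 := ⟨k - 1, by omega⟩
  rw [AO.main_sum p j s hs (by omega), AO.alt_sum (p := p) (j + 1) hk hp, Nat.add_sub_cancel]
  ring
end

section
/- Fix k ≥ 2 and s ≥ 1 with k ≥ 2s. For each prime p > k+2, the sum ∑_{𝐤 ∈ I_0(k,s)} (-1)^{dep(𝐤)} H_p(𝐤) is congruent modulo p to 2·binom(k-1, 2s-1)·(1 - 2^{1-k})·B_{p-k}/k, where H_p(k_1,...,k_r) = ∑_{p>m_1>⋯>m_r>0} ∏ m_i^{-k_i}, dep denotes the depth (number of components), and I_0(k,s) is the set of indices with first component > 1, weight k, and height s. -/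
/-- Auxiliary strict truncated multiple harmonic sum. -/
def HAux (p : ℕ) : ℕ → List ℕ → ZMod p
  | _, [] => 1
  | N, k :: ks => ∑ m ∈ Finset.Ioo 0 N, ((m : ZMod p))⁻¹ ^ k * HAux p m ks

/-- `H_p(k₁,…,k_r) = ∑_{p > m₁ > ⋯ > m_r > 0} ∏ᵢ mᵢ^{-kᵢ}` in `ℤ/pℤ`. -/
def Hp (p : ℕ) (ks : List ℕ) : ZMod p := HAux p p ks

open Finset

lemma lm_comp_succ {M : Type*} [AddCommMonoid M] (n : ℕ) (F : List ℕ → M) :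
    ∑ c : Composition (n+1), F c.blocks =
      ∑ ij ∈ antidiagonal n, ∑ c : Composition ij.2, F ((ij.1+1) :: c.blocks) := by
  rw [Finset.sum_sigma']
  symm
  refine Finset.sum_bij (fun a ha => (⟨(a.1.1+1) :: a.2.blocks, ?_, ?_⟩ : Composition (n+1))) ?_ ?_ ?_ ?_
  · intro i hi
    rcases List.mem_cons.1 hi with h | h
    · omega
    · exact a.2.blocks_pos h
  · have := mem_antidiagonal.1 (mem_sigma.1 ha).1
    rw [List.sum_cons, a.2.blocks_sum]; omega
  · simp
  · rintro ⟨⟨i, j⟩, c⟩ h ⟨⟨i', j'⟩, c'⟩ h' e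
    simp only [Composition.mk.injEq, List.cons.injEq, add_left_inj] at e
    obtain ⟨rfl, e⟩ := e
    have h1 := mem_antidiagonal.1 (mem_sigma.1 h).1
    have h2 := mem_antidiagonal.1 (mem_sigma.1 h').1
    simp only at h1 h2
    obtain rfl : j = j' := by omega
    have : c = c' := Composition.ext e
    rw [this]
  · intro c _
    obtain ⟨l, hl, hs⟩ := c
    cases l with
    | nil => simp at hs
    | cons i l =>
      have hi : 0 < i := hl (by simp)
      rw [List.sum_cons] at hs
      refine ⟨⟨(i-1, l.sum), ⟨l, fun h => hl (by simp [h]), rfl⟩⟩, ?_, ?_⟩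
      · simp; omega
      · ext1; simp; omega
  · intros; rfl

section
variable {p : ℕ}

abbrev lmR (p : ℕ) := Polynomial (ZMod p)

noncomputable def lmE (p i : ℕ) : lmR p := if 2 ≤ i then Polynomial.X ^ 2 else 1

noncomputable def lmWt (p N : ℕ) (l : List ℕ) : lmR p :=
  Polynomial.C ((-1) ^ l.length * HAux p N l) * (Polynomial.X ^ 2) ^ (l.filter fun x => 2 ≤ x).length

noncomputable def lmG (p N : ℕ) : PowerSeries (lmR p) :=
  PowerSeries.mk fun k => ∑ c : Composition k, lmWt p N c.blocks

noncomputable def lmPhi (p m : ℕ) : PowerSeries (lmR p) :=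
  PowerSeries.mk fun i => if i = 0 then 0 else - Polynomial.C ((m : ZMod p)⁻¹ ^ i) * lmE p i

noncomputable def lmPhi0 (p m : ℕ) : PowerSeries (lmR p) :=
  PowerSeries.mk fun i => if i ≤ 1 then 0 else - Polynomial.C ((m : ZMod p)⁻¹ ^ i) * lmE p i

noncomputable def lmG0 (p : ℕ) : PowerSeries (lmR p) :=
  PowerSeries.mk fun k => ∑ c : Composition k, if 2 ≤ c.blocks.headI then lmWt p p c.blocks else 0

lemma lm_wt_cons (N i : ℕ) (l : List ℕ) : lmWt p N (i :: l) =
    ∑ m ∈ Ioo 0 N, (- Polynomial.C ((m : ZMod p)⁻¹ ^ i) * lmE p i) * lmWt p m l := by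
  simp only [lmWt, HAux, lmE, List.length_cons]
  rw [mul_sum, map_sum, sum_mul]
  apply sum_congr rfl
  intro m _
  by_cases h : 2 ≤ i
  · rw [List.filter_cons_of_pos (by simpa using h)]
    simp only [h, if_true, List.length_cons, map_mul, map_pow, map_neg, map_one]; ring
  · rw [List.filter_cons_of_neg (by simpa using h)]
    simp only [h, if_false, map_mul, map_pow, map_neg, map_one]; ring

lemma lm_G_rec (N : ℕ) : lmG p N = 1 + ∑ m ∈ Ioo 0 N, lmPhi p m * lmG p m := by
  ext1 k
  cases k with
  | zero =>
    have : ∀ m, PowerSeries.constantCoeff (lmPhi p m) = 0 := by intro m; simp [lmPhi]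
    have h2 : ∀ c : Composition 0, c.blocks = [] := by
      intro c; 
      obtain ⟨l, hl, hs⟩ := c
      cases l with
      | nil => rfl
      | cons i l => 
        have hi : 0 < i := hl (by simp)
        rw [List.sum_cons] at hs; omega
    simp [lmG, this]
    simp only [h2, lmWt, HAux]
    simp [composition_card]
  | succ n =>
    rw [map_add, map_sum, PowerSeries.coeff_one]
    simp only [PowerSeries.coeff_mul, Finset.Nat.sum_antidiagonal_succ, lmG, PowerSeries.coeff_mk, lmPhi]
    simp only [if_true, zero_mul, zero_add, Nat.succ_ne_zero, if_false]
    rw [lm_comp_succ]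
    simp only [lm_wt_cons, mul_sum]
    rw [sum_comm]
    apply sum_congr rfl; intro ij _
    rw [sum_comm]

lemma lm_G0_rec : lmG0 p = ∑ m ∈ Ioo 0 p, lmPhi0 p m * lmG p m := by
  ext1 k
  cases k with
  | zero =>
    have : ∀ m, PowerSeries.constantCoeff (lmPhi0 p m) = 0 := by intro m; simp [lmPhi0]
    have h2 : ∀ c : Composition 0, c.blocks = [] := by
      intro c; 
      obtain ⟨l, hl, hs⟩ := c
      cases l with
      | nil => rfl
      | cons i l => 
        have hi : 0 < i := hl (by simp)
        rw [List.sum_cons] at hs; omega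
    simp [lmG0, this]
    simp only [h2]
    simp
  | succ n =>
    rw [map_sum]
    simp only [PowerSeries.coeff_mul, Finset.Nat.sum_antidiagonal_succ, lmG, lmG0, PowerSeries.coeff_mk, lmPhi0]
    simp only [zero_le, if_true, zero_mul, zero_add]
    rw [lm_comp_succ (F := fun l => if 2 ≤ l.headI then lmWt p p l else 0)]
    simp only [lm_wt_cons, mul_sum, List.headI]
    rw [sum_comm]
    apply sum_congr rfl; intro ij _
    by_cases h : 2 ≤ ij.1 + 1
    · have h' : ¬ (ij.1 + 1 ≤ 1) := by omega
      simp only [h, h', if_true, if_false]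
      rw [sum_comm]
    · have h' : (ij.1 + 1 ≤ 1) := by omega
      simp only [h, h', if_true, if_false]
      simp

lemma lm_G_prod (N : ℕ) : lmG p (N+1) = ∏ j ∈ range N, (1 + lmPhi p (j+1)) := by
  induction N with
  | zero => rw [lm_G_rec, show Ioo 0 (0+1) = (∅ : Finset ℕ) from by ext; simp; omega]; simp
  | succ N ih =>
    rw [prod_range_succ, ← ih, lm_G_rec (N+1+1)]
    have e : Ioo 0 (N+1+1) = insert (N+1) (Ioo 0 (N+1)) := by ext; simp only [mem_Ioo, mem_insert]; omega
    rw [e, sum_insert (by simp)]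
    have := lm_G_rec (p := p) (N+1)
    linear_combination -this

lemma lm_G0_prod : lmG0 p = ∑ m ∈ range (p-1), lmPhi0 p (m+1) * ∏ j ∈ range m, (1 + lmPhi p (j+1)) := by
  rw [lm_G0_rec]
  have e : Ioo 0 p = Ico (0+1) (p-1+1) := by ext; simp; omega
  rw [e, ← sum_Ico_add', ← range_eq_Ico]
  simp only [lm_G_prod]

lemma lm_LHS (k s : ℕ) : ∑ c ∈ Izero k s, (-1 : ZMod p) ^ c.length * Hp p c.blocks =
    (PowerSeries.coeff k (lmG0 p)).coeff (2*s) := by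
  rw [lmG0, PowerSeries.coeff_mk, Polynomial.finsetSum_coeff, Izero, sum_filter]
  apply sum_congr rfl
  intro c _
  by_cases h : 2 ≤ c.blocks.headI
  · simp only [h, true_and, if_true, lmWt, Polynomial.coeff_C_mul, ← pow_mul, Polynomial.coeff_X_pow, Hp]
    by_cases h2 : (c.blocks.filter fun x => 2 ≤ x).length = s
    · simp [h2, Composition.length]
    · have : 2 * s ≠ 2 * (c.blocks.filter fun x => 2 ≤ x).length := by omega
      simp only [h2, this, if_false, mul_zero]
  · simp [h]

end

lemma lm_vand {S : Type*} [CommRing S] (n : ℕ) : ∀ b c : S,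
    ∑ m ∈ range (n+1), (-1)^m * (n.choose m : S) * (∏ j ∈ range m, (b + j)) *
      (∏ j ∈ Ico m n, (c + j)) = ∏ j ∈ range n, (c - b + j) := by
  induction n with
  | zero => intro b c; simp
  | succ n ih =>
    intro b c
    have h1 := ih b c
    have h2 := ih (b+1) (c+1)
    have e2 : ∏ j ∈ range n, ((c+1) - (b+1) + (j:S)) = ∏ j ∈ range n, (c - b + j) := by
      apply prod_congr rfl; intros; ring
    rw [e2] at h2
    rw [prod_range_succ, sum_range_succ']
    have A : ∀ m ∈ range (n+1), (-1)^(m+1) * ((n+1).choose (m+1) : S) * (∏ j ∈ range (m+1), (b + j)) *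
      (∏ j ∈ Ico (m+1) (n+1), (c + j)) = 
       (-1)^(m+1) * (n.choose (m+1) : S) * (∏ j ∈ range (m+1), (b + j)) *
      (∏ j ∈ Ico (m+1) (n+1), (c + j)) + (-b) * ((-1)^m * (n.choose m : S) * (∏ j ∈ range m, (b + 1 + j)) *
      (∏ j ∈ Ico m n, (c + 1 + j))) := by
      intro m hm
      have p1 : ∏ j ∈ range (m+1), (b + (j:S)) = b * ∏ j ∈ range m, (b + 1 + j) := by
        rw [prod_range_succ', mul_comm]; congr 1
        · simp
        · apply prod_congr rfl; intros; push_cast; ring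
      have p2 : ∏ j ∈ Ico (m+1) (n+1), (c + (j:S)) = ∏ j ∈ Ico m n, (c + 1 + j) := by
        rw [← prod_Ico_add' (fun j : ℕ => c + (j:S)) m n 1]
        apply prod_congr rfl; intros; push_cast; ring
      rw [Nat.choose_succ_succ, p1, p2]; push_cast; ring
    rw [sum_congr rfl A, sum_add_distrib, ← mul_sum, h2]
    have B : ∑ m ∈ range (n+1), (-1)^(m+1) * (n.choose (m+1) : S) * (∏ j ∈ range (m+1), (b + j)) *
      (∏ j ∈ Ico (m+1) (n+1), (c + j)) + (-1)^0 * ((n+1).choose 0 : S) * (∏ j ∈ range 0, (b + j)) *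
      (∏ j ∈ Ico 0 (n+1), (c + j)) = (c + n) * ∏ j ∈ range n, (c - b + j) := by
      rw [← h1, mul_sum]
      have := sum_range_succ' (fun m => (-1)^(m) * (n.choose (m) : S) * (∏ j ∈ range (m), (b + j)) *
      (∏ j ∈ Ico (m) (n+1), (c + j))) (n+1)
      simp only [Nat.choose_zero_right] at this ⊢
      rw [← this, sum_range_succ]
      simp only [Nat.choose_succ_self, Nat.cast_zero, mul_zero, zero_mul, add_zero]
      apply sum_congr rfl
      intro m hm
      rw [prod_Ico_succ_top (by simp at hm; omega)]; ring
    linear_combination B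

section
variable {p : ℕ} [Fact p.Prime]
open Polynomial in
lemma lm_poly0 : ∏ j ∈ range p, ((j : (ZMod p)[X]) - X) = X - X ^ p * 1 ∨ p = 2 := by
  by_cases h2 : p = 2
  · right; exact h2
  left
  have hodd : Odd p := (Fact.out : p.Prime).odd_of_ne_two h2
  have h := FiniteField.X_pow_card_sub_X_natDegree_eq (ZMod p) (Fact.out : p.Prime).one_lt
  have hr := FiniteField.roots_X_pow_card_sub_X (ZMod p)
  rw [ZMod.card] at hr
  have hm : (X ^ p - X : (ZMod p)[X]).Monic := by
    apply monic_X_pow_sub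
    rw [degree_X]; exact_mod_cast (Fact.out : p.Prime).one_lt
  have key := prod_multiset_X_sub_C_of_monic_of_roots_card_eq hm (by rw [hr, h]; simp [ZMod.card])
  rw [hr] at key
  have e : ∏ j ∈ range p, ((j : (ZMod p)[X]) - X) = ∏ a : ZMod p, (C a - X) := by
    refine prod_bij (fun j _ => (j : ZMod p)) (by simp) ?_ ?_ (by simp)
    · intro a ha b hb hab
      simp only [mem_range] at ha hb
      rw [ZMod.natCast_eq_natCast_iff'] at hab
      rwa [Nat.mod_eq_of_lt ha, Nat.mod_eq_of_lt hb] at hab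
    · intro b _
      exact ⟨b.val, by simpa using ZMod.val_lt b, by simp⟩
  rw [e]
  have : ∏ a : ZMod p, (C a - X) = (-1)^p * ∏ a : ZMod p, (X - C a) := by
    rw [show (-1 : (ZMod p)[X])^p = ∏ a : ZMod p, (-1) by simp [ZMod.card], ← prod_mul_distrib]
    apply prod_congr rfl; intros; ring
  rw [this, hodd.neg_one_pow]
  have k2 : ∏ a : ZMod p, (X - C a) = X ^ p - X := key
  rw [k2]; ring

open Polynomial in
lemma lm_poly (h2 : p ≠ 2) {n : ℕ} (hn : n < p) :
    ∏ j ∈ (range p).erase n, ((j : (ZMod p)[X]) - (n : (ZMod p)[X]) - X) = X ^ (p-1) - 1 := by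
  have h := lm_poly0 (p := p)
  simp only [h2, or_false, mul_one] at h
  have h' := congrArg (fun q => q.comp (X + (n : (ZMod p)[X]))) h
  simp only [sub_comp, X_comp, pow_comp, Polynomial.prod_comp, natCast_comp] at h'
  have hnp : (n : (ZMod p)[X])^p = n := by
    rw [← C_eq_natCast, ← C_pow, ZMod.pow_card]
  rw [add_pow_char, hnp, ← mul_prod_erase _ _ (mem_range.2 hn)] at h'
  have hX : (X : (ZMod p)[X]) ≠ 0 := X_ne_zero
  have hp : p = (p-1)+1 := by have := (Fact.out : p.Prime).pos; omega
  have e : ∏ j ∈ (range p).erase n, ((j : (ZMod p)[X]) - (n : (ZMod p)[X]) - X) = ∏ j ∈ (range p).erase n, ((j : (ZMod p)[X]) - (X + (n : (ZMod p)[X]))) := by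
    apply prod_congr rfl; intros; ring
  rw [e]
  apply mul_left_cancel₀ hX
  have e3 : (X : (ZMod p)[X]) ^ p = X ^ (p-1) * X := by rw [← pow_succ, ← hp]
  linear_combination -h' + e3

variable {S : Type*} [CommRing S] [Algebra (ZMod p) S]

lemma lm_polyS (h2 : p ≠ 2) {n : ℕ} (hn : n < p) (x : S) :
    ∏ j ∈ (range p).erase n, ((j : S) - n - x) = x ^ (p-1) - 1 := by
  have := congrArg (Polynomial.aeval x) (lm_poly h2 hn)
  simpa [map_prod] using this

lemma lm_polyS0 (h2 : p ≠ 2) (x : S) :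
    ∏ j ∈ range p, ((j : S) - x) = x - x ^ p := by
  have h := lm_poly0 (p := p)
  simp only [h2, or_false, mul_one] at h
  have := congrArg (Polynomial.aeval x) h
  simpa [map_prod] using this

lemma lm_erase [IsDomain S] (h2 : p ≠ 2) {n : ℕ} (hn : n < p) (x : S) :
    (∏ j ∈ (range p).erase n, (((j : S) - x)^2 - ((n:S)-x)^2)) * (n - x) = x ^ p - x := by
  have : CharP S p := charP_of_injective_algebraMap (algebraMap (ZMod p) S).injective p
  have e : ∏ j ∈ (range p).erase n, (((j : S) - x)^2 - ((n:S)-x)^2) =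
     (∏ j ∈ (range p).erase n, ((j : S) - n - 0)) * ∏ j ∈ (range p).erase n, ((j : S) - (2*x-n)) := by
    rw [← prod_mul_distrib]; apply prod_congr rfl; intros; ring
  rw [e, lm_polyS h2 hn]
  have h0 := lm_polyS0 h2 (2*x-n)
  have hc (m : ℕ) : (m : S)^p = m := by
    have : ((m : ZMod p))^p = m := ZMod.pow_card _
    have := congrArg (algebraMap (ZMod p) S) this
    rwa [map_pow, map_natCast] at this
  have hc2 := hc 2
  push_cast at hc2
  rw [sub_pow_char, mul_pow, hc, hc2, ← mul_prod_erase _ _ (mem_range.2 hn)] at h0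
  have hp2 : p - 1 ≠ 0 := by have := (Fact.out : p.Prime).one_lt; omega
  have t : (2 : S) ≠ 0 := by
    have := CharP.cast_eq_zero_iff S p 2
    push_cast at this
    rw [ne_eq, this]
    intro h
    exact h2 ((Nat.prime_dvd_prime_iff_eq Fact.out Nat.prime_two).1 h)
  apply mul_left_cancel₀ t
  rw [zero_pow hp2]
  linear_combination -h0

lemma lm_node (x : S) (J : ℕ → S) (hJ : ∀ m < p, 0 < m → J m * (m * (m - x)) = 1) {n : ℕ} (hn : n < p) :
    (∑ m ∈ range p, (∏ j ∈ range m, (((j : S) - x)^2 - ((n:S)-x)^2)) * ∏ j ∈ range m, J (j+1)) * (n - x)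
      = -(-1)^n * x := by
  have h1 : ∑ m ∈ range p, (∏ j ∈ range m, (((j : S) - x)^2 - ((n:S)-x)^2)) * ∏ j ∈ range m, J (j+1)
    = ∑ m ∈ range (n+1), (∏ j ∈ range m, (((j : S) - x)^2 - ((n:S)-x)^2)) * ∏ j ∈ range m, J (j+1) := by
    symm
    apply sum_subset
    · intro a; simp; omega
    · intro m _ hm
      rw [prod_eq_zero (i := n)]
      · simp
      · simp at hm ⊢; omega
      · simp
  rw [h1]
  have hJ' (a b : ℕ) (hb : b ≤ n) : (∏ j ∈ Ico a b, J (j+1)) * ∏ j ∈ Ico a b, (((j+1 : ℕ) : S) * (((j+1 : ℕ) : S) - x)) = 1 := by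
    rw [← prod_mul_distrib]
    apply prod_eq_one
    intro j hj
    simp at hj
    exact hJ _ (by omega) (by omega)
  have h2 : ∑ m ∈ range (n+1), (∏ j ∈ range m, (((j : S) - x)^2 - ((n:S)-x)^2)) * ∏ j ∈ range m, J (j+1) 
     = (∏ j ∈ range n, J (j+1)) * (n.factorial * ∑ m ∈ range (n+1), (-1)^m * (n.choose m : S) * (∏ j ∈ range m, ((n - 2 * x) + j)) *
      (∏ j ∈ Ico m n, ((1 - x) + j))) := by
    rw [mul_sum, mul_sum]
    apply sum_congr rfl
    intro m hm
    have hm : m ≤ n := by simp at hm; omega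
    have e1 : ∏ j ∈ range m, (((j : S) - x)^2 - ((n:S)-x)^2) = (-1)^m * (n.descFactorial m : S) * ∏ j ∈ range m, ((n - 2 * x) + j) := by
      rw [Nat.descFactorial_eq_prod_range]
      push_cast
      rw [show (-1:S)^m = ∏ j ∈ range m, (-1) by simp, ← prod_mul_distrib, ← prod_mul_distrib]
      apply prod_congr rfl
      intro j hj
      simp at hj
      rw [Nat.cast_sub (by omega)]; ring
    have e2 : (n.factorial : S) = m.factorial * ∏ j ∈ Ico m n, ((j+1 : ℕ) : S) := by
      rw [← prod_range_add_one_eq_factorial, ← prod_range_add_one_eq_factorial]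
      push_cast
      rw [prod_range_mul_prod_Ico _ hm]
    have e3 : ∏ j ∈ range n, J (j+1) = (∏ j ∈ range m, J (j+1)) * ∏ j ∈ Ico m n, J (j+1) :=
      (prod_range_mul_prod_Ico _ hm).symm
    have e4 := hJ' m n le_rfl
    rw [prod_mul_distrib] at e4
    have e5 : ∏ j ∈ Ico m n, (((j+1 : ℕ) : S) - x) = ∏ j ∈ Ico m n, ((1 - x) + j) := by
      apply prod_congr rfl; intros; push_cast; ring
    rw [e5] at e4
    rw [e1, e2, e3, Nat.descFactorial_eq_factorial_mul_choose]
    push_cast at e4 ⊢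
    linear_combination (-(-1)^m * (m.factorial : S) * n.choose m * (∏ j ∈ range m, ((n - 2 * x) + j)) * (∏ j ∈ range m, J (j+1))) * e4
  rw [h2, lm_vand]
  have e6 := hJ' 0 n le_rfl
  rw [← range_eq_Ico, prod_mul_distrib] at e6
  have e7 : ∏ j ∈ range n, ((j+1:ℕ) : S) = n.factorial := by
    rw [← prod_range_add_one_eq_factorial]; push_cast; rfl
  rw [e7] at e6
  have e8 : (∏ j ∈ range n, ((1:S) - x - (n - 2*x) + j)) * (n - x) = -(-1)^n * x * ∏ j ∈ range n, (((j+1:ℕ) : S) - x) := by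
    have : ∏ j ∈ range n, ((1:S) - x - (n - 2*x) + j) = (-1)^n * ∏ j ∈ range n, ((j:S) - x) := by
      rw [← prod_range_reflect, show (-1:S)^n = ∏ j ∈ range n, (-1) by simp, ← prod_mul_distrib]
      apply prod_congr rfl
      intro j hj
      simp at hj
      rw [Nat.cast_sub (by omega), Nat.cast_sub (by omega)]; push_cast; ring
    rw [this]
    have k1 := prod_range_succ (fun j : ℕ => (j:S) - x) n
    rw [prod_range_succ'] at k1
    push_cast at k1 ⊢
    linear_combination -(-1)^n * k1
  linear_combination (∏ j ∈ range n, J (j+1)) * n.factorial * e8 -(-1)^n * x * e6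

open Polynomial in
lemma lm_ident [IsDomain S] (h2 : p ≠ 2) (x : S) (J : ℕ → S) (hJ : ∀ m < p, 0 < m → J m * (m * (m - x)) = 1)
    (hx : ∀ n < p, (n : S) - x ≠ 0) (hinj : Set.InjOn (fun n : ℕ => ((n:S) - x)^2) (range p : Finset ℕ))
    (w : S) :
    -(x ^ (p-1) - 1) * ∑ m ∈ range p, (∏ j ∈ range m, (((j : S) - x)^2 - w)) * ∏ j ∈ range m, J (j+1)
     = ∑ m ∈ range p, (-1)^m * ∏ j ∈ (range p).erase m, (((j:S)-x)^2 - w) := by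
  have deg1 (s : Finset ℕ) (hs : s.card < p) (a : S) : ((∏ j ∈ s, (C (((j : S) - x)^2) - X)) * C a).degree < ((range p).card : WithBot ℕ) := by
    refine lt_of_le_of_lt (degree_mul_le _ _) ?_
    rw [card_range]
    have : (∏ j ∈ s, (C (((j : S) - x)^2) - X)).degree ≤ (s.card : WithBot ℕ) := by
      refine (degree_prod_le _ _).trans ?_
      refine (sum_le_sum (g := fun _ => 1) ?_).trans (by simp)
      intro i _
      refine (degree_sub_le _ _).trans ?_
      simp only [sup_le_iff, degree_X_le, and_true]
      exact degree_C_le.trans zero_le_one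
    calc _ ≤ (s.card : WithBot ℕ) + 0 := add_le_add this degree_C_le
      _ < p := by simpa using hs
  have hp0 := (Fact.out : p.Prime).pos
  have key : (∑ m ∈ range p, (∏ j ∈ range m, (C (((j : S) - x)^2) - X)) * C (-(x ^ (p-1) - 1) * ∏ j ∈ range m, J (j+1)) : S[X])
     = ∑ m ∈ range p, (∏ j ∈ (range p).erase m, (C (((j:S)-x)^2) - X)) * C ((-1)^m) := by
    apply eq_of_degrees_lt_of_eval_index_eq (range p) hinj
    · rw [← mem_degreeLT]
      refine Submodule.sum_mem _ fun m hm => ?_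
      rw [mem_degreeLT]
      exact deg1 _ (by simpa using hm) _
    · rw [← mem_degreeLT]
      refine Submodule.sum_mem _ fun m hm => ?_
      rw [mem_degreeLT]
      exact deg1 _ (by rw [card_erase_of_mem hm, card_range]; omega) _
    · intro n hn
      have hn : n < p := by simpa using hn
      simp only [eval_finsetSum, eval_mul, eval_prod, eval_sub, eval_C, eval_X]
      apply mul_right_cancel₀ (hx n hn)
      have a := lm_node x J hJ hn
      have b := lm_erase h2 hn x
      have e3 : x ^ p = x ^ (p-1) * x := by rw [← pow_succ]; congr 1; omega
      rw [sum_eq_single_of_mem (s := range p) (f := fun m => (∏ j ∈ (range p).erase m, (((j:S)-x)^2 - ((n:S)-x)^2)) * (-1)^m) n (by simpa using hn) ?_]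
      · rw [show ∑ m ∈ range p, (∏ j ∈ range m, (((j : S) - x)^2 - ((n:S)-x)^2)) * (-(x ^ (p-1) - 1) * ∏ j ∈ range m, J (j+1)) = -(x ^ (p-1) - 1) * ∑ m ∈ range p, (∏ j ∈ range m, (((j : S) - x)^2 - ((n:S)-x)^2)) * ∏ j ∈ range m, J (j+1) by rw [mul_sum]; apply sum_congr rfl; intros; ring]
        linear_combination -(x ^ (p-1) - 1) * a - (-1)^n * b - (-1)^n * e3
      · intro m _ hm
        rw [prod_eq_zero (i := n)]
        · simp
        · simp [hn, hm.symm]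
        · simp
  have := congrArg (eval w) key
  simp only [eval_finsetSum, eval_mul, eval_prod, eval_sub, eval_C, eval_X] at this
  rw [mul_sum]
  convert this using 1
  · apply sum_congr rfl; intros; ring
  · apply sum_congr rfl; intros; ring
end

open PowerSeries in
lemma lm_half (n : ℕ) : (2:ℚ)^n * (Polynomial.bernoulli n).eval (1/2) = (2 - 2^n) * bernoulli n := by
  have h1 := Polynomial.bernoulli_generating_function (1/2 : ℚ)
  have h2 := bernoulliPowerSeries_mul_exp_sub_one ℚ
  have h3 := congrArg (rescale (1/2 : ℚ)) h2
  have h4 : rescale (1/2 : ℚ) (exp ℚ) ^ 2 = exp ℚ := by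
    rw [← map_pow, exp_pow_eq_rescale_exp, rescale_rescale]; simp
  rw [map_mul, map_sub, map_one, rescale_X] at h3
  set E := rescale (1/2 : ℚ) (exp ℚ)
  have hne : exp ℚ - 1 ≠ 0 := by
    intro h
    have := congrArg (coeff 1) h
    simp [coeff_exp, coeff_one] at this
  have hC : (2 : ℚ⟦X⟧) * C (1/2 : ℚ) = 1 := by
    have : (2 : ℚ⟦X⟧) = C (2:ℚ) := (map_ofNat C 2).symm
    rw [this, ← map_mul]; norm_num
  have key : (mk fun n => Polynomial.aeval (1/2:ℚ) ((1 / n.factorial : ℚ) • Polynomial.bernoulli n)) =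
      2 * rescale (1/2 : ℚ) (bernoulliPowerSeries ℚ) - bernoulliPowerSeries ℚ := by
    apply mul_right_cancel₀ hne
    rw [h1, sub_mul, h2, ← h4]
    linear_combination - 2 * (E + 1) * h3 - X * (E + 1) * hC
  have := congrArg (coeff n) key
  have e2 : (2 : ℚ⟦X⟧) = C (2:ℚ) := (map_ofNat C 2).symm
  rw [map_sub, e2, coeff_C_mul, coeff_rescale] at this
  simp only [bernoulliPowerSeries, coeff_mk, map_smul, smul_eq_mul, Polynomial.coe_aeval_eq_eval, eq_ratCast, Rat.cast_id] at this
  have hf : (n.factorial : ℚ) ≠ 0 := by positivity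
  have h5 : (1/2:ℚ)^n * 2^n = 1 := by rw [← mul_pow]; norm_num
  have h6 : (Polynomial.bernoulli n).eval (1/2:ℚ) = (2 * (1/2)^n - 1) * bernoulli n := by
    field_simp at this ⊢
    linear_combination this
  rw [h6]
  linear_combination 2 * bernoulli n * h5

section
variable {p : ℕ} [Fact p.Prime]

def lmRel (p : ℕ) [Fact p.Prime] (q : ℚ) (z : ZMod p) : Prop := (q.den : ZMod p) ≠ 0 ∧ (q : ZMod p) = z

lemma lmRel.add {q r : ℚ} {y z : ZMod p} (h : lmRel p q y) (h' : lmRel p r z) : lmRel p (q+r) (y+z) := by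
  obtain ⟨h, rfl⟩ := h
  obtain ⟨h', rfl⟩ := h'
  refine ⟨fun h0 => ?_, Rat.cast_add_of_ne_zero h h'⟩
  obtain ⟨c, hc⟩ := Rat.add_den_dvd q r
  have : ((q.den * r.den : ℕ) : ZMod p) = 0 := by rw [hc]; push_cast; rw [h0]; simp
  push_cast at this
  exact (mul_ne_zero h h') this

lemma lmRel.mul {q r : ℚ} {y z : ZMod p} (h : lmRel p q y) (h' : lmRel p r z) : lmRel p (q*r) (y*z) := by
  obtain ⟨h, rfl⟩ := h
  obtain ⟨h', rfl⟩ := h'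
  refine ⟨fun h0 => ?_, Rat.cast_mul_of_ne_zero h h'⟩
  obtain ⟨c, hc⟩ := Rat.mul_den_dvd q r
  have : ((q.den * r.den : ℕ) : ZMod p) = 0 := by rw [hc]; push_cast; rw [h0]; simp
  push_cast at this
  exact (mul_ne_zero h h') this

lemma lmRel.nat (n : ℕ) : lmRel p n n := ⟨by simp, by simp⟩
lemma lmRel.int (n : ℤ) : lmRel p n n := ⟨by simp, by simp⟩

lemma lmRel.sum {s : Finset ℕ} {f : ℕ → ℚ} {g : ℕ → ZMod p} (h : ∀ i ∈ s, lmRel p (f i) (g i)) :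
    lmRel p (∑ i ∈ s, f i) (∑ i ∈ s, g i) := by
  induction s using Finset.induction_on with
  | empty => simpa using lmRel.nat (p := p) 0
  | insert a s ha ih =>
    rw [sum_insert ha, sum_insert ha]
    exact (h a (by simp)).add (ih fun i hi => h i (by simp [hi]))

lemma lmRel.pow {q : ℚ} {y : ZMod p} (h : lmRel p q y) (n : ℕ) : lmRel p (q^n) (y^n) := by
  induction n with
  | zero => simpa using lmRel.nat (p := p) 1
  | succ n ih => rw [pow_succ, pow_succ]; exact ih.mul h

lemma lmRel.inv {n : ℕ} (h : (n : ZMod p) ≠ 0) : lmRel p ((n:ℚ)⁻¹) ((n : ZMod p)⁻¹) := by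
  have hn : n ≠ 0 := by rintro rfl; simp at h
  refine ⟨?_, ?_⟩
  · rw [Rat.inv_natCast_den_of_pos (by omega)]; exact h
  · simp

lemma lmRel.eq {q : ℚ} {y z : ZMod p} (h : lmRel p q y) (h' : lmRel p q z) : y = z := h.2.symm.trans h'.2

lemma lm_nat_ne {n : ℕ} (h0 : 0 < n) (h : n < p) : (n : ZMod p) ≠ 0 := by
  rw [ne_eq, ZMod.natCast_eq_zero_iff]
  exact Nat.not_dvd_of_pos_of_lt h0 h

lemma lm_bern_int (j : ℕ) (hj : j + 1 < p) : lmRel p (bernoulli j) (bernoulli j : ℚ) := by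
  suffices ∃ z, lmRel p (bernoulli j) z by
    obtain ⟨z, hz⟩ := this
    exact ⟨hz.1, rfl⟩
  induction j using Nat.strong_induction_on with
  | _ j ih =>
  have h := sum_bernoulli (j+1)
  rw [sum_range_succ] at h
  have hj0 : ((j+1:ℕ) : ℚ) ≠ 0 := by positivity
  have e : bernoulli j = ((j+1:ℕ):ℚ)⁻¹ * (((if j + 1 = 1 then 1 else 0 : ℕ) : ℚ) + ((-1 : ℤ) : ℚ) * ∑ k ∈ range j, (((j+1).choose k : ℕ) : ℚ) * bernoulli k) := by
    rw [eq_inv_mul_iff_mul_eq₀ hj0]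
    rw [Nat.choose_succ_self_right] at h
    push_cast at h ⊢
    linear_combination h
  rw [e]
  have ih' : ∀ k, ∃ z, k < j → lmRel p (bernoulli k) z := by
    intro k
    by_cases hk : k < j
    · obtain ⟨z, hz⟩ := ih k hk (by omega)
      exact ⟨z, fun _ => hz⟩
    · exact ⟨0, fun h => absurd h hk⟩
  choose g hg using ih'
  exact ⟨_, (lmRel.inv (lm_nat_ne (by omega) hj)).mul ((lmRel.nat _).add ((lmRel.int _).mul
    (lmRel.sum (g := fun k => ((j+1).choose k : ZMod p) * g k) fun k hk => (lmRel.nat _).mul (hg k (by simpa using hk)))))⟩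

lemma lm_bern_eval {n : ℕ} (hn : n + 1 < p) {t : ℚ} {y : ZMod p} (h : lmRel p t y) :
    lmRel p ((Polynomial.bernoulli n).eval t)
     (∑ i ∈ range (n+1), ((bernoulli (n-i) : ℚ) : ZMod p) * (n.choose i : ZMod p) * y^i) := by
  rw [Polynomial.bernoulli_def, Polynomial.eval_finsetSum]
  simp only [Polynomial.eval_monomial]
  refine lmRel.sum fun i hi => ?_
  simp only [mem_range] at hi
  exact ((lm_bern_int (n-i) (by omega)).mul (lmRel.nat _)).mul (h.pow _)

lemma lm_even_sum {R : Type*} [CommRing R] (f : ℕ → R) (q : ℕ) :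
    ∑ m ∈ range (2*q+1), ((-1)^m + 1) * f m = 2 * ∑ i ∈ range (q+1), f (2*i) := by
  induction q with
  | zero => simp; ring
  | succ q ih =>
    rw [show 2*(q+1)+1 = 2*q+1+1+1 by ring, sum_range_succ, sum_range_succ, ih, sum_range_succ _ (q+1)]
    rw [show 2*(q+1) = 2*q+1+1 by ring]
    simp only [pow_succ, pow_mul]
    ring

lemma lm_range_univ {M : Type*} [AddCommMonoid M] (f : ZMod p → M) : ∑ m ∈ range p, f m = ∑ a : ZMod p, f a := by
  refine sum_bij (fun j _ => (j : ZMod p)) (by simp) ?_ ?_ (by simp)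
  · intro a ha b hb hab
    simp only [mem_range] at ha hb
    rw [ZMod.natCast_eq_natCast_iff'] at hab
    rwa [Nat.mod_eq_of_lt ha, Nat.mod_eq_of_lt hb] at hab
  · intro b _
    exact ⟨b.val, by simpa using ZMod.val_lt b, by simp⟩

lemma lm_sigma {k : ℕ} (hk : 2 ≤ k) (hp : k + 2 < p) :
    ∑ m ∈ range p, (-1 : ZMod p)^m * ((m : ZMod p)⁻¹)^k =
     -2 * (1 - (2 : ZMod p) ^ ((1 : ℤ) - k)) * ((bernoulli (p - k) / k : ℚ) : ZMod p) := by
  obtain ⟨e, he⟩ : ∃ e, p = k + (e + 1) := ⟨p - k - 1, by omega⟩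
  have hpk : p - k = e + 1 := by omega
  have hodd : Odd p := (Fact.out : p.Prime).odd_of_ne_two (by omega)
  obtain ⟨q, hq⟩ := hodd
  have hk0 : (k : ZMod p) ≠ 0 := lm_nat_ne (by omega) (by omega)
  have h20 : (2 : ZMod p) ≠ 0 := by exact_mod_cast lm_nat_ne (p := p) (n := 2) (by omega) (by omega)
  rw [hpk]
  -- convert inverse powers
  have c1 : ∀ a : ZMod p, (a⁻¹)^k = a^e := by
    intro a
    by_cases ha : a = 0
    · subst ha; rw [inv_zero, zero_pow (by omega), zero_pow (by omega)]
    · have := ZMod.pow_card_sub_one_eq_one ha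
      rw [show p - 1 = k + e by omega, pow_add] at this
      rw [inv_pow]
      exact inv_eq_of_mul_eq_one_right this
  simp only [c1]
  have c2 : ∑ m ∈ range p, ((m : ZMod p))^e = 0 := by
    rw [lm_range_univ (fun a : ZMod p => a^e)]
    apply FiniteField.sum_pow_lt_card_sub_one
    rw [ZMod.card]; omega
  have c3 := lm_even_sum (fun m => ((m : ZMod p))^e) q
  rw [← hq] at c3
  simp only [add_mul, one_mul, sum_add_distrib, c2, add_zero] at c3
  have c4 := Polynomial.sum_range_pow_eq_bernoulli_sub (q+1) e
  have r1 : lmRel p (((e+1:ℕ):ℚ) * ∑ i ∈ range (q+1), ((i:ℕ):ℚ)^e) (((e+1:ℕ) : ZMod p) * ∑ i ∈ range (q+1), (i : ZMod p)^e) :=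
    (lmRel.nat _).mul (lmRel.sum fun i _ => (lmRel.nat _).pow _)
  have rb := lm_bern_int (p := p) (e+1) (by omega)
  have hq2 : ((q+1:ℕ) : ZMod p) = 1 * ((2:ℕ) : ZMod p)⁻¹ := by
    rw [one_mul]
    apply eq_inv_of_mul_eq_one_left
    have : ((2*q+1:ℕ) : ZMod p) = 0 := by rw [← hq]; simp
    push_cast at this ⊢
    linear_combination this
  have r2 := lm_bern_eval (p := p) (n := e+1) (by omega) (lmRel.nat (q+1))
  have hhalf : lmRel p (1/2 : ℚ) (1 * ((2:ℕ) : ZMod p)⁻¹) := by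
    have := (lmRel.nat (p := p) 1).mul (lmRel.inv (p := p) (n := 2) (by exact_mod_cast h20))
    simpa [div_eq_mul_inv] using this
  have r3 := lm_bern_eval (p := p) (n := e+1) (by omega) hhalf
  rw [hq2] at r2
  generalize (∑ i ∈ range (e+1+1), ((bernoulli (e+1-i) : ℚ) : ZMod p) * ((e+1).choose i : ZMod p) * (1 * ((2:ℕ) : ZMod p)⁻¹)^i) = Z at r2 r3
  have d1 : ((e+1:ℕ) : ZMod p) * ∑ i ∈ range (q+1), (i : ZMod p)^e = Z + ((-1:ℤ) : ZMod p) * ((bernoulli (e+1) : ℚ) : ZMod p) := by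
    refine r1.eq ?_
    have := r2.add ((lmRel.int (-1)).mul rb)
    convert this using 1
    rw [show ((e+1:ℕ):ℚ) = (e:ℚ)+1 by push_cast; rfl, c4]
    push_cast; ring
  have d2 : (((2:ℕ)) : ZMod p)^(e+1) * Z = ((2:ℤ) + ((-1:ℤ) : ZMod p) * ((2:ℕ) : ZMod p)^(e+1)) * ((bernoulli (e+1) : ℚ) : ZMod p) := by
    have a1 := ((lmRel.nat (p := p) 2).pow (e+1)).mul r3
    have a2 := (((lmRel.int (p := p) 2).add ((lmRel.int (-1)).mul ((lmRel.nat 2).pow (e+1)))).mul rb)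
    refine a1.eq ?_
    convert a2 using 1
    have := lm_half (e+1)
    push_cast
    linear_combination this
  rw [show (bernoulli (e+1) / k : ℚ) = bernoulli (e+1) * (k:ℚ)⁻¹ from div_eq_mul_inv _ _, (rb.mul (lmRel.inv hk0)).2]
  have hek : ((e+1:ℕ) : ZMod p) = -k := by
    have : ((k + (e+1) : ℕ) : ZMod p) = 0 := by rw [← he]; simp
    push_cast at this ⊢
    linear_combination this
  rw [hek] at d1
  have h2p : (2 : ZMod p) ^ ((1 : ℤ) - k) = 2^(e+1) := by
    have := ZMod.pow_card_sub_one_eq_one h20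
    rw [show p - 1 = k + e by omega, pow_add] at this
    rw [zpow_sub₀ h20, zpow_one, zpow_natCast, div_eq_iff (pow_ne_zero _ h20)]
    rw [pow_succ]
    linear_combination -2 * this
  rw [h2p]
  have c5 : ∑ i ∈ range (q+1), (((2*i:ℕ)) : ZMod p)^e = 2^e * ∑ i ∈ range (q+1), (i : ZMod p)^e := by
    rw [mul_sum]; apply sum_congr rfl; intros; push_cast; rw [mul_pow]
  rw [c3, c5]
  generalize ∑ i ∈ range (q+1), (i : ZMod p)^e = T at *
  generalize ((bernoulli (e+1) : ℚ) : ZMod p) = b at *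
  push_cast at d1 d2
  rw [← mul_assoc (-2 * (1 - 2^(e+1))), eq_mul_inv_iff_mul_eq₀ hk0]
  rw [pow_succ] at d2 ⊢
  linear_combination -2*2^e*d1 - d2
end

section
variable {p : ℕ} [Fact p.Prime]

noncomputable def lmI (p : ℕ) (c : lmR p) (m : ℕ) : PowerSeries (lmR p) :=
  PowerSeries.mk fun n => Polynomial.C ((m : ZMod p)⁻¹ ^ (n+1)) * c ^ n

noncomputable def lmJ (p : ℕ) (m : ℕ) : PowerSeries (lmR p) :=
  PowerSeries.mk fun n => Polynomial.C ((m : ZMod p)⁻¹ ^ (n+2))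

lemma lm_cast (m : ℕ) : (m : PowerSeries (lmR p)) = PowerSeries.C (Polynomial.C (m : ZMod p)) := by
  simp

lemma lm_I_mul (c : lmR p) {m : ℕ} (h0 : 0 < m) (h : m < p) :
    ((m : PowerSeries (lmR p)) - PowerSeries.C c * PowerSeries.X) * lmI p c m = 1 := by
  have hm := lm_nat_ne h0 h
  rw [lm_cast, sub_mul, mul_assoc]
  ext1 n
  rw [map_sub, PowerSeries.coeff_C_mul, PowerSeries.coeff_C_mul]
  cases n with
  | zero =>
    simp only [lmI, PowerSeries.coeff_zero_X_mul, PowerSeries.coeff_mk, PowerSeries.coeff_one]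
    have : Polynomial.C (m : ZMod p) * Polynomial.C (m : ZMod p)⁻¹ = 1 := by
      rw [← Polynomial.C_mul, mul_inv_cancel₀ hm, Polynomial.C_1]
    simp only [zero_add, pow_one, pow_zero, mul_one, mul_zero, sub_zero, if_true, this]
  | succ n =>
    rw [PowerSeries.coeff_succ_X_mul]
    simp only [lmI, PowerSeries.coeff_mk, PowerSeries.coeff_one]
    have : Polynomial.C (m : ZMod p) * Polynomial.C ((m : ZMod p)⁻¹ ^ (n+1+1)) = Polynomial.C ((m : ZMod p)⁻¹ ^ (n+1)) := by
      rw [← Polynomial.C_mul, pow_succ' _ (n+1), ← mul_assoc, mul_inv_cancel₀ hm, one_mul]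
    rw [if_neg (by omega)]
    linear_combination c ^ (n+1) * this

lemma lm_J_eq {m : ℕ} : lmJ p m = PowerSeries.C (Polynomial.C (m : ZMod p)⁻¹) * lmI p 1 m := by
  ext1 n
  rw [PowerSeries.coeff_C_mul]
  simp only [lmI, lmJ, PowerSeries.coeff_mk]
  rw [one_pow, mul_one, ← Polynomial.C_mul, ← pow_succ']

lemma lm_J_mul {m : ℕ} (h0 : 0 < m) (h : m < p) :
    lmJ p m * ((m : PowerSeries (lmR p)) * ((m : PowerSeries (lmR p)) - PowerSeries.X)) = 1 := by
  have h1 := lm_I_mul (p := p) 1 h0 h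
  have hm := lm_nat_ne h0 h
  have h2 : (m : PowerSeries (lmR p)) * PowerSeries.C (Polynomial.C (m : ZMod p)⁻¹) = 1 := by
    rw [lm_cast, ← map_mul, ← Polynomial.C_mul, mul_inv_cancel₀ hm]; simp
  rw [map_one, one_mul] at h1
  rw [lm_J_eq]
  linear_combination (m : PowerSeries (lmR p)) * PowerSeries.C (Polynomial.C (m : ZMod p)⁻¹) * h1 + h2

noncomputable def lmw (p : ℕ) : PowerSeries (lmR p) := PowerSeries.C (Polynomial.X ^ 2) * PowerSeries.X ^ 2

lemma lm_phi0 (m : ℕ) : lmPhi0 p m = - lmw p * lmJ p m := by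
  ext1 n
  rw [lmw, neg_mul, mul_assoc, map_neg, PowerSeries.coeff_C_mul, PowerSeries.coeff_X_pow_mul']
  simp only [lmPhi0, lmJ, PowerSeries.coeff_mk, lmE]
  by_cases h : 2 ≤ n
  · rw [if_neg (by omega), if_pos h, if_pos h, show n - 2 + 2 = n by omega]; ring
  · rw [if_pos (by omega), if_neg h]; simp

lemma lm_phi {m : ℕ} (h0 : 0 < m) (h : m < p) :
    1 + lmPhi p m = (((m : PowerSeries (lmR p)) - PowerSeries.X)^2 - lmw p) * lmJ p m := by
  have hm := lm_nat_ne h0 h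
  have e : lmPhi p m = lmPhi0 p m - PowerSeries.C (Polynomial.C (m : ZMod p)⁻¹) * PowerSeries.X := by
    ext1 n
    rw [map_sub, PowerSeries.coeff_C_mul, PowerSeries.coeff_X]
    simp only [lmPhi0, lmPhi, PowerSeries.coeff_mk, lmE]
    rcases n with _ | _ | n
    · simp
    · simp
    · simp
  rw [e, lm_phi0]
  have h2 : (m : PowerSeries (lmR p)) * PowerSeries.C (Polynomial.C (m : ZMod p)⁻¹) = 1 := by
    rw [lm_cast, ← map_mul, ← Polynomial.C_mul, mul_inv_cancel₀ hm]; simp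
  have h3 := lm_J_mul h0 h
  linear_combination (-1 + ((m : PowerSeries (lmR p)) - PowerSeries.X)^2 * lmJ p m) * h2 - ((m : PowerSeries (lmR p)) - PowerSeries.X) * PowerSeries.C (Polynomial.C (m : ZMod p)⁻¹) * h3

noncomputable def lmA (p m : ℕ) : PowerSeries (lmR p) := ((m : PowerSeries (lmR p)) - PowerSeries.X)^2 - lmw p

noncomputable def lmC0 (p : ℕ) : PowerSeries (lmR p) :=
  ∑ m ∈ range (p-1), lmJ p (m+1) * ∏ j ∈ range m, (lmA p (j+1) * lmJ p (j+1))

lemma lm_G0_C0 : lmG0 p = - lmw p * lmC0 p := by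
  rw [lm_G0_prod, lmC0, mul_sum]
  apply sum_congr rfl
  intro m hm
  simp only [mem_range] at hm
  rw [lm_phi0, mul_assoc]
  congr 2
  apply prod_congr rfl
  intro j hj
  simp only [mem_range] at hj
  rw [lm_phi (by omega) (by omega)]; rfl

noncomputable def lmK (p m : ℕ) : PowerSeries (lmR p) := lmI p (1 + Polynomial.X) m * lmI p (1 - Polynomial.X) m

lemma lm_A_fac (m : ℕ) : lmA p m = ((m : PowerSeries (lmR p)) - PowerSeries.C (1 + Polynomial.X) * PowerSeries.X) *
    ((m : PowerSeries (lmR p)) - PowerSeries.C (1 - Polynomial.X) * PowerSeries.X) := by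
  simp only [lmA, lmw, map_add, map_sub, map_one, map_pow]
  ring

lemma lm_K_mul {m : ℕ} (h0 : 0 < m) (h : m < p) : lmA p m * lmK p m = 1 := by
  have h1 := lm_I_mul (p := p) (1 + Polynomial.X) h0 h
  have h2 := lm_I_mul (p := p) (1 - Polynomial.X) h0 h
  rw [lm_A_fac, lmK, mul_mul_mul_comm, h1, h2, one_mul]

noncomputable def lmB (p : ℕ) : PowerSeries (lmR p) := ∑ m ∈ (range p).erase 0, (-1)^m * lmK p m

lemma lm_tele {R : Type*} [CommRing R] (q : ℕ) (A J : ℕ → R) :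
    ∑ m ∈ range (q+1), (∏ j ∈ range m, A j) * ∏ j ∈ range m, J (j+1) =
      1 + A 0 * ∑ m ∈ range q, J (m+1) * ∏ j ∈ range m, (A (j+1) * J (j+1)) := by
  rw [sum_range_succ', add_comm, mul_sum]
  congr 1
  · simp
  · apply sum_congr rfl
    intro m _
    rw [prod_range_succ', prod_range_succ (fun j => J (j+1)), prod_mul_distrib]
    ring

set_option maxHeartbeats 1000000 in
lemma lm_main_ident (h2 : p ≠ 2) :
    -((PowerSeries.X : PowerSeries (lmR p)) ^ (p-1) - 1) * (1 + lmA p 0 * lmC0 p) =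
     (((PowerSeries.C (1 + Polynomial.X) * PowerSeries.X : PowerSeries (lmR p)))^(p-1) - 1) *
     (((PowerSeries.C (1 - Polynomial.X) * PowerSeries.X : PowerSeries (lmR p)))^(p-1) - 1) * (1 + lmA p 0 * lmB p) := by
  have hp0 := (Fact.out : p.Prime).pos
  have hc1 : ∀ n : ℕ, PowerSeries.coeff 1 ((n : PowerSeries (lmR p)) - PowerSeries.X) = -1 := by
    intro n
    rw [lm_cast, map_sub, PowerSeries.coeff_C]; simp
  have id := lm_ident h2 (PowerSeries.X : PowerSeries (lmR p)) (lmJ p) (fun m hm h0 => lm_J_mul h0 hm) ?_ ?_ (lmw p)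
  rotate_left
  · intro n _ h
    have := hc1 n
    rw [h] at this
    simp at this
  · intro a ha b hb hab
    simp only [coe_range, Set.mem_Iio] at ha hb
    simp only at hab
    rcases sq_eq_sq_iff_eq_or_eq_neg.1 hab with h | h
    · have h' := congrArg (PowerSeries.coeff 0) h
      rw [lm_cast, lm_cast] at h'
      simp only [map_sub, PowerSeries.coeff_zero_C, PowerSeries.coeff_zero_X, sub_zero] at h'
      have h' := Polynomial.C_injective h'
      rw [ZMod.natCast_eq_natCast_iff'] at h'
      rwa [Nat.mod_eq_of_lt ha, Nat.mod_eq_of_lt hb] at h'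
    · exfalso
      have h' := congrArg (PowerSeries.coeff 1) h
      rw [map_neg, hc1, hc1, neg_neg] at h'
      have h'' := congrArg (Polynomial.coeff · 0) h'
      simp at h''
      have : Fact (2 < p) := ⟨by have := (Fact.out : p.Prime).two_le; omega⟩
      exact ZMod.neg_one_ne_one h''
  have l1 : ∑ m ∈ range p, (∏ j ∈ range m, (((j : PowerSeries (lmR p)) - PowerSeries.X)^2 - lmw p)) * ∏ j ∈ range m, lmJ p (j+1)
     = 1 + lmA p 0 * lmC0 p := by
    have := lm_tele (p - 1) (lmA p) (lmJ p)
    rw [show p - 1 + 1 = p by omega] at this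
    exact this
  rw [l1] at id
  rw [id]
  have l2 : ((PowerSeries.C (1 + Polynomial.X) * PowerSeries.X : PowerSeries (lmR p)))^(p-1) - 1 = ∏ j ∈ (range p).erase 0, ((j : PowerSeries (lmR p)) - PowerSeries.C (1 + Polynomial.X) * PowerSeries.X) := by
    rw [← lm_polyS h2 hp0]; simp
  have l3 : ((PowerSeries.C (1 - Polynomial.X) * PowerSeries.X : PowerSeries (lmR p)))^(p-1) - 1 = ∏ j ∈ (range p).erase 0, ((j : PowerSeries (lmR p)) - PowerSeries.C (1 - Polynomial.X) * PowerSeries.X) := by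
    rw [← lm_polyS h2 hp0]; simp
  rw [l2, l3, ← prod_mul_distrib]
  simp only [← lm_A_fac]
  change ∑ m ∈ range p, (-1)^m * ∏ j ∈ (range p).erase m, lmA p j = _
  rw [← add_sum_erase _ _ (mem_range.2 hp0), lmB, mul_add, mul_sum, mul_sum, mul_one, pow_zero, one_mul]
  refine congrArg (fun z => _ + z) (sum_congr rfl ?_)
  intro m hm
  have hm' : 0 < m ∧ m < p := by simp at hm; omega
  have m1 := mul_prod_erase (range p) (fun j => lmA p j) (mem_range.2 hp0)
  have m2 := mul_prod_erase (range p) (fun j => lmA p j) (mem_range.2 hm'.2)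
  have m3 := lm_K_mul hm'.1 hm'.2
  linear_combination (-1)^m * lmK p m * (m2 - m1) - (-1)^m * (∏ j ∈ (range p).erase m, lmA p j) * m3

lemma lm_coeff_eq (h2 : p ≠ 2) {n : ℕ} (hn : n + 3 < p) :
    PowerSeries.coeff n (lmC0 p) = PowerSeries.coeff n (lmB p) := by
  have h := lm_main_ident h2
  rw [mul_pow, mul_pow] at h
  have hA : lmA p 0 = PowerSeries.X ^ 2 * PowerSeries.C (1 - Polynomial.X ^ 2) := by
    simp only [lmA, lmw, map_sub, map_one, map_pow, Nat.cast_zero]; ring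
  set c := (PowerSeries.C (1 + Polynomial.X) : PowerSeries (lmR p)) ^ (p-1)
  set d := (PowerSeries.C (1 - Polynomial.X) : PowerSeries (lmR p)) ^ (p-1)
  have hX : (PowerSeries.X : PowerSeries (lmR p)) ^ (p-1) = PowerSeries.X ^ 2 * PowerSeries.X ^ (p-3) := by
    rw [← pow_add]; congr 1; omega
  have hdvd : (PowerSeries.X : PowerSeries (lmR p)) ^ (p-3) ∣ PowerSeries.C (1 - Polynomial.X ^ 2) * (lmC0 p - lmB p) := by
    refine ⟨(1 + lmA p 0 * lmC0 p) + (c * d * PowerSeries.X ^ (p-1) - c - d) * (1 + lmA p 0 * lmB p), ?_⟩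
    have hX2 : (PowerSeries.X : PowerSeries (lmR p)) ^ 2 ≠ 0 := pow_ne_zero _ PowerSeries.X_ne_zero
    apply mul_left_cancel₀ hX2
    rw [← mul_assoc, ← mul_assoc, ← hA, ← hX]
    linear_combination h
  rw [PowerSeries.X_pow_dvd_iff] at hdvd
  have h3 := hdvd n (by omega)
  rw [PowerSeries.coeff_C_mul, map_sub] at h3
  rcases mul_eq_zero.1 h3 with h | h
  · exfalso
    have := congrArg (Polynomial.coeff · 0) h
    simp at this
  · exact sub_eq_zero.1 h

lemma lm_B_coeff (n : ℕ) :
    2 * Polynomial.X * PowerSeries.coeff n (lmB p) = Polynomial.C (∑ m ∈ range p, (-1 : ZMod p)^m * ((m : ZMod p)⁻¹)^(n+2)) *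
      ((1 + Polynomial.X)^(n+1) - (1 - Polynomial.X)^(n+1)) := by
  have hp0 := (Fact.out : p.Prime).pos
  have h : PowerSeries.C (2 * Polynomial.X) * (PowerSeries.X * lmB p) =
    ∑ m ∈ (range p).erase 0, (-1)^m * (lmI p (1 + Polynomial.X) m - lmI p (1 - Polynomial.X) m) := by
    rw [lmB, mul_sum, mul_sum]
    apply sum_congr rfl
    intro m hm
    have hm' : 0 < m ∧ m < p := by simp at hm; omega
    have h1 := lm_I_mul (p := p) (1 + Polynomial.X) hm'.1 hm'.2
    have h2 := lm_I_mul (p := p) (1 - Polynomial.X) hm'.1 hm'.2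
    have e2 : PowerSeries.C (2 * Polynomial.X : lmR p) = PowerSeries.C (1 + Polynomial.X) - PowerSeries.C (1 - Polynomial.X) := by
      rw [← map_sub]; congr 1; ring
    rw [lmK, e2]
    linear_combination (-1)^m * (lmI p (1 + Polynomial.X) m * h2 - lmI p (1 - Polynomial.X) m * h1)
  have h' := congrArg (PowerSeries.coeff (n+1)) h
  rw [PowerSeries.coeff_C_mul, PowerSeries.coeff_succ_X_mul, map_sum] at h'
  rw [h', ← add_sum_erase _ _ (mem_range.2 hp0)]
  simp only [Nat.cast_zero, inv_zero]
  rw [zero_pow (by omega), mul_zero, zero_add, map_sum, sum_mul]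
  apply sum_congr rfl
  intro m _
  have : ((-1)^m : PowerSeries (lmR p)) = PowerSeries.C (Polynomial.C ((-1)^m)) := by simp
  rw [this, PowerSeries.coeff_C_mul, map_sub]
  simp only [lmI, PowerSeries.coeff_mk, map_mul]
  ring
end

lemma lm_one_sub {R : Type*} [CommRing R] (n j : ℕ) :
    ((1 - Polynomial.X : Polynomial R)^n).coeff j = (-1)^j * (n.choose j : R) := by
  have : (1 - Polynomial.X : Polynomial R)^n = ((1 + Polynomial.X)^n).comp (-Polynomial.X) := by
    simp [sub_eq_add_neg]
  rw [this, ← neg_one_mul, ← Polynomial.C_1, ← Polynomial.C_neg, Polynomial.comp_C_mul_X_coeff, Polynomial.C_1, Polynomial.coeff_one_add_X_pow, mul_comm]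

theorem stmt_13 (k s : ℕ) (hk : 2 ≤ k) (hs : 1 ≤ s) (hks : 2 * s ≤ k)
    (p : ℕ) [Fact p.Prime] (hp : k + 2 < p) :
    ∑ c ∈ Izero k s, (-1 : ZMod p) ^ c.length * Hp p c.blocks =
      2 * ((k - 1).choose (2 * s - 1) : ZMod p) * (1 - (2 : ZMod p) ^ ((1 : ℤ) - k)) *
        ((bernoulli (p - k) / k : ℚ) : ZMod p) := by
  have h20 : (2 : ZMod p) ≠ 0 := by exact_mod_cast lm_nat_ne (p := p) (n := 2) (by omega) (by omega)
  rw [lm_LHS, lm_G0_C0]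
  have hsig := lm_sigma hk hp
  obtain ⟨n, rfl⟩ : ∃ n, k = n + 2 := ⟨k - 2, by omega⟩
  obtain ⟨t, rfl⟩ : ∃ t, s = t + 1 := ⟨s - 1, by omega⟩
  have hB := lm_B_coeff (p := p) n
  rw [hsig] at hB
  have e1 : PowerSeries.coeff (n+2) (-lmw p * lmC0 p) = - (Polynomial.X * (Polynomial.X * PowerSeries.coeff n (lmB p))) := by
    rw [lmw, neg_mul, map_neg, mul_assoc, PowerSeries.coeff_C_mul, PowerSeries.coeff_X_pow_mul, lm_coeff_eq (by omega) (by omega)]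
    ring
  rw [e1, Polynomial.coeff_neg, show 2 * (t+1) = (2 * t + 1) + 1 by ring, Polynomial.coeff_X_mul]
  have hc := congrArg (Polynomial.coeff · (2*t+1)) hB
  beta_reduce at hc
  rw [Polynomial.coeff_C_mul, Polynomial.coeff_sub, Polynomial.coeff_one_add_X_pow, lm_one_sub, mul_assoc,
    show (2 : lmR p) = Polynomial.C (2 : ZMod p) from (map_ofNat Polynomial.C 2).symm, Polynomial.coeff_C_mul] at hc
  have hodd : (-1 : ZMod p)^(2*t+1) = -1 := by rw [pow_succ, pow_mul]; simp
  rw [hodd] at hc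
  rw [show n + 2 - 1 = n + 1 by omega, show 2*t+1+1-1 = 2*t+1 by omega]
  apply mul_left_cancel₀ h20
  linear_combination -hc
end

section
/- Fix k ≥ 2 and s ≥ 1 with k ≥ 2s. For every prime p, the identity ∑_{𝐤 ∈ I_0(k,s)} H_p^⋆(𝐤) = (-1)^{k-1} ∑_{𝐤 ∈ I_0(k,s)} (-1)^{dep(𝐤)} H_p(𝐤) holds in ℤ/pℤ for all sufficiently large p (i.e., the corresponding elements of 𝒜 are equal). -/
open PowerSeries in
theorem sum_comp_succ {A : Type*} [AddCommMonoid A] (n : ℕ) (f : List ℕ → A) :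
    ∑ c : Composition (n + 1), f c.blocks =
      ∑ a ∈ Finset.range (n + 1), ∑ c : Composition (n - a), f ((a + 1) :: c.blocks) := by
  rw [Finset.sum_sigma']
  symm
  refine Finset.sum_bij
    (fun (x : (a : ℕ) × Composition (n - a)) hx =>
      (⟨(x.1 + 1) :: x.2.blocks, by
        intro i hi
        rcases List.mem_cons.1 hi with h | h
        · omega
        · exact x.2.blocks_pos h, by
        have h1 : x.1 < n + 1 := by
          have := (Finset.mem_sigma.1 hx).1
          exact Finset.mem_range.1 this
        have := x.2.blocks_sum
        simp only [List.sum_cons]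
        omega⟩ : Composition (n + 1))) ?_ ?_ ?_ ?_
  · intros; simp
  · rintro ⟨a, c⟩ h1 ⟨b, d⟩ h2 h
    have h3 : (a + 1) :: c.blocks = (b + 1) :: d.blocks := congrArg Composition.blocks h
    rw [List.cons.injEq] at h3
    obtain ⟨h4, h5⟩ := h3
    obtain rfl : a = b := by omega
    have : c = d := Composition.ext h5
    rw [this]
  · rintro ⟨l, hp, hl⟩ -
    cases l with
    | nil => simp at hl
    | cons a l =>
      have ha : 0 < a := hp (by simp)
      have hl' : a + l.sum = n + 1 := by simpa using hl
      refine ⟨⟨a - 1, ⟨l, fun {i} hi => hp (by simp [hi]), by omega⟩⟩, ?_, ?_⟩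
      · simp; omega
      · apply Composition.ext
        simp
        omega
  · intros; rfl

noncomputable section

/-- generating function over compositions -/
def gfun {A : Type*} [CommRing A] (f : List ℕ → A) : PowerSeries A :=
  PowerSeries.mk fun n => ∑ c : Composition n, f c.blocks

/-- generating function of one letter -/
def phi {A : Type*} [CommRing A] (w : ℕ → A) (z : A) : PowerSeries A :=
  PowerSeries.mk fun n => if n = 0 then 0 else w n * z ^ n

theorem gfun_eq {A ι : Type*} [CommRing A] (f : List ℕ → A) (w : ℕ → A) (S : Finset ι) (z : ι → A)
    (g : ι → List ℕ → A)
    (h : ∀ a l, f (a :: l) = ∑ m ∈ S, w a * z m ^ a * g m l) :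
    gfun f = PowerSeries.C (f []) + ∑ m ∈ S, phi w (z m) * gfun (g m) := by
  ext n
  rw [map_add, map_sum]
  cases n with
  | zero =>
    have h0 : ∀ c : Composition 0, c.blocks = [] := fun c => by
      rcases hc : c.blocks with _ | ⟨a, l⟩
      · rfl
      · have h2 := c.blocks_pos (i := a) (by simp [hc])
        have h3 := c.blocks_sum
        simp [hc] at h3
        omega
    have h1 : ∀ f : List ℕ → A, ∑ c : Composition 0, f c.blocks = f [] := fun f => by
      simp [h0, composition_card]
    simp [gfun, phi, PowerSeries.coeff_mk, h1, PowerSeries.coeff_mul]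
  | succ n =>
    have : ∀ m ∈ S, PowerSeries.coeff (n + 1) (phi w (z m) * gfun (g m)) =
        ∑ a ∈ Finset.range (n + 1), w (a + 1) * z m ^ (a + 1) *
          ∑ c : Composition (n - a), g m c.blocks := by
      intro m _
      rw [PowerSeries.coeff_mul, Finset.Nat.sum_antidiagonal_eq_sum_range_succ_mk,
        Finset.sum_range_succ']
      simp [gfun, phi, PowerSeries.coeff_mk]
    rw [Finset.sum_congr rfl this]
    simp only [gfun, PowerSeries.coeff_mk, PowerSeries.coeff_C]
    rw [sum_comp_succ, Finset.sum_comm]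
    simp only [h]
    simp [Finset.mul_sum]
    refine Finset.sum_congr rfl fun a _ => ?_
    rw [Finset.sum_comm]

theorem prod_one_sub {p : ℕ} [hp : Fact p.Prime] {B : Type*} [CommRing B] [Algebra (ZMod p) B]
    (c : B) :
    ∏ m ∈ Finset.Ioo 0 p, (1 - algebraMap (ZMod p) B ((m : ZMod p)⁻¹) * c) = 1 - c ^ (p - 1) := by
  have hp1 := hp.out.one_lt
  have key : ∏ m ∈ Finset.Ioo 0 p, (1 - Polynomial.C ((m : ZMod p)⁻¹) * Polynomial.X) =
      (1 - Polynomial.X ^ (p - 1) : Polynomial (ZMod p)) := by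
    apply Polynomial.eq_of_natDegree_lt_card_of_eval_eq' _ _ (Finset.univ : Finset (ZMod p))
    · intro x _
      rw [Polynomial.eval_prod]
      by_cases hx : x = 0
      · subst hx
        have : p - 1 ≠ 0 := by omega
        simp [this]
      · have h1 : x ^ (p - 1) = 1 := ZMod.pow_card_sub_one_eq_one hx
        have : x.val ∈ Finset.Ioo 0 p := by
          rw [Finset.mem_Ioo]
          exact ⟨Nat.pos_of_ne_zero (by simpa [ZMod.val_eq_zero] using hx), ZMod.val_lt x⟩
        rw [Finset.prod_eq_zero this]
        · simp [h1]
        · simp [hx]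
    · rw [Finset.card_univ, ZMod.card, max_lt_iff]
      constructor
      · refine lt_of_le_of_lt (Polynomial.natDegree_prod_le _ _) ?_
        refine lt_of_le_of_lt (Finset.sum_le_card_nsmul _ _ 1 ?_) ?_
        · intro m _
          compute_degree
        · simp; omega
      · refine lt_of_le_of_lt (b := p - 1) ?_ (by omega)
        compute_degree
  have := congrArg (Polynomial.aeval c) key
  simpa [map_prod] using this

/-- letter weight -/
def wt {A : Type*} [CommRing A] (u : A) (n : ℕ) : A := if 2 ≤ n then u ^ 2 else 1
/-- head letter weight -/
def wt' {A : Type*} [CommRing A] (u : A) (n : ℕ) : A := if 2 ≤ n then u ^ 2 else 0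
/-- head word weight -/
def hw {A : Type*} [CommRing A] (w' w : ℕ → A) : List ℕ → A
  | [] => 0
  | a :: l => w' a * (l.map w).prod

theorem phi_mul {A : Type*} [CommRing A] (u z : A) :
    (1 - phi (wt u) z) * (1 - PowerSeries.C z * PowerSeries.X) =
      (1 - PowerSeries.C z * (PowerSeries.C (1 + u) * PowerSeries.X)) *
      (1 - PowerSeries.C z * (PowerSeries.C (1 - u) * PowerSeries.X)) := by
  have h : phi (wt u) z * (1 - PowerSeries.C z * PowerSeries.X) =
      PowerSeries.C z * PowerSeries.X - PowerSeries.C (z ^ 2) * PowerSeries.X ^ 2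
        + PowerSeries.C (u ^ 2 * z ^ 2) * PowerSeries.X ^ 2 := by
    ext n
    rw [mul_sub, mul_one, mul_left_comm]
    simp only [map_add, map_sub, PowerSeries.coeff_C_mul]
    match n with
    | 0 => simp [phi]
    | 1 => simp [phi, wt, PowerSeries.coeff_succ_mul_X, PowerSeries.coeff_X_pow]
    | 2 =>
      simp [phi, wt, PowerSeries.coeff_succ_mul_X, PowerSeries.coeff_X_pow, PowerSeries.coeff_X]
      ring
    | n + 3 =>
      simp [phi, wt, PowerSeries.coeff_succ_mul_X, PowerSeries.coeff_X_pow, PowerSeries.coeff_X]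
      ring
  rw [sub_mul, h]
  simp only [map_add, map_sub, map_one, map_pow, map_mul]
  ring

section main
variable {p : ℕ} {A : Type*} [CommRing A] [Algebra (ZMod p) A]

/-- image of the inverse of m -/
def zz (p : ℕ) (A : Type*) [CommRing A] [Algebra (ZMod p) A] (m : ℕ) : A :=
  algebraMap (ZMod p) A ((m : ZMod p)⁻¹)

/-- non-strict weights -/
def fS (p : ℕ) (w : ℕ → A) [Algebra (ZMod p) A] (N : ℕ) (l : List ℕ) : A :=
  (l.map w).prod * algebraMap (ZMod p) A (HstarAux p N l)
/-- strict weights -/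
def fH (p : ℕ) (w : ℕ → A) [Algebra (ZMod p) A] (N : ℕ) (l : List ℕ) : A :=
  (l.map w).prod * algebraMap (ZMod p) A (HAux p N l)

theorem gS (w : ℕ → A) (N : ℕ) : gfun (fS p w N) =
    1 + ∑ m ∈ Finset.Ioo 0 N, phi w (zz p A m) * gfun (fS p w (m + 1)) := by
  rw [gfun_eq (fS p w N) w (Finset.Ioo 0 N) (zz p A) (fun m => fS p w (m + 1))]
  · simp [fS, HstarAux]
  · intro a l
    simp only [fS, HstarAux, List.map_cons, List.prod_cons, map_sum, Finset.mul_sum, map_mul,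
      map_pow, zz]
    exact Finset.sum_congr rfl fun m _ => by ring

theorem gH (w : ℕ → A) (N : ℕ) : gfun (fH p w N) =
    1 + ∑ m ∈ Finset.Ioo 0 N, phi w (zz p A m) * gfun (fH p w m) := by
  rw [gfun_eq (fH p w N) w (Finset.Ioo 0 N) (zz p A) (fun m => fH p w m)]
  · simp [fH, HAux]
  · intro a l
    simp only [fH, HAux, List.map_cons, List.prod_cons, map_sum, Finset.mul_sum, map_mul,
      map_pow, zz]
    exact Finset.sum_congr rfl fun m _ => by ring

theorem gS' (w' w : ℕ → A) (N : ℕ) :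
    gfun (fun l => hw w' w l * algebraMap (ZMod p) A (HstarAux p N l)) =
    ∑ m ∈ Finset.Ioo 0 N, phi w' (zz p A m) * gfun (fS p w (m + 1)) := by
  rw [gfun_eq _ w' (Finset.Ioo 0 N) (zz p A) (fun m => fS p w (m + 1))]
  · simp [hw]
  · intro a l
    simp only [fS, HstarAux, hw, map_sum, Finset.mul_sum, map_mul, map_pow, zz]
    exact Finset.sum_congr rfl fun m _ => by ring

theorem gH' (w' w : ℕ → A) (N : ℕ) :
    gfun (fun l => hw w' w l * algebraMap (ZMod p) A (HAux p N l)) =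
    ∑ m ∈ Finset.Ioo 0 N, phi w' (zz p A m) * gfun (fH p w m) := by
  rw [gfun_eq _ w' (Finset.Ioo 0 N) (zz p A) (fun m => fH p w m)]
  · simp [hw]
  · intro a l
    simp only [fH, HAux, hw, map_sum, Finset.mul_sum, map_mul, map_pow, zz]
    exact Finset.sum_congr rfl fun m _ => by ring

theorem Ioo_succ (N : ℕ) : Finset.Ioo 0 (N + 2) = insert (N + 1) (Finset.Ioo 0 (N + 1)) := by
  ext x; simp; omega

theorem gS_prod (w : ℕ → A) (N : ℕ) :
    gfun (fS p w (N + 1)) * ∏ m ∈ Finset.Ioo 0 (N + 1), (1 - phi w (zz p A m)) = 1 := by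
  induction N with
  | zero => rw [gS]; simp [show Finset.Ioo 0 1 = (∅ : Finset ℕ) from rfl]
  | succ N ih =>
    have h1 := gS (p := p) w (N + 2)
    rw [Ioo_succ, Finset.sum_insert (by simp)] at h1
    have h2 := gS (p := p) w (N + 1)
    rw [Ioo_succ, Finset.prod_insert (by simp), ← mul_assoc]
    have : gfun (fS p w (N + 1 + 1)) * (1 - phi w (zz p A (N + 1))) = gfun (fS p w (N + 1)) := by
      change gfun (fS p w (N + 2)) * _ = _
      change gfun (fS p w (N + 2)) = 1 + (_ * gfun (fS p w (N + 2)) + _) at h1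
      linear_combination h1 - h2
    rw [this, ih]

theorem gH_prod (w : ℕ → A) (N : ℕ) :
    gfun (fH p w (N + 1)) = ∏ m ∈ Finset.Ioo 0 (N + 1), (1 + phi w (zz p A m)) := by
  induction N with
  | zero => rw [gH]; simp [show Finset.Ioo 0 1 = (∅ : Finset ℕ) from rfl]
  | succ N ih =>
    have h1 := gH (p := p) w (N + 2)
    rw [Ioo_succ, Finset.sum_insert (by simp)] at h1
    have h2 := gH (p := p) w (N + 1)
    rw [Ioo_succ, Finset.prod_insert (by simp), ← ih]
    linear_combination h1 - h2

/-- sign-twisted weights -/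
def tw (w : ℕ → A) (n : ℕ) : A := -((-1) ^ n * w n)

theorem phi_tw [hp : Fact p.Prime] (w : ℕ → A) (m : ℕ) (hm : m ≤ p) :
    phi (tw w) (zz p A m) = - phi w (zz p A (p - m)) := by
  have : (zz p A (p - m)) = - zz p A m := by
    simp [zz, Nat.cast_sub hm, inv_neg]
  rw [this]
  ext n
  simp only [phi, tw, PowerSeries.coeff_mk, map_neg]
  split_ifs
  · simp
  · rw [neg_pow (zz p A m)]; ring

theorem hw_tw (w' w : ℕ → A) (l : List ℕ) :
    hw (tw w') (tw w) l = (-1) ^ l.sum * (-1) ^ l.length * hw w' w l := by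
  have h : ∀ l : List ℕ, (l.map (tw w)).prod = (-1) ^ l.sum * (-1) ^ l.length * (l.map w).prod := by
    intro l
    induction l with
    | nil => simp
    | cons a l ih => simp [ih, tw]; ring
  cases l with
  | nil => simp [hw]
  | cons a l => simp [hw, h, tw]; ring

theorem main_gf [hp : Fact p.Prime] (w' w : ℕ → A) :
    - gfun (fun l => hw (tw w') (tw w) l * algebraMap (ZMod p) A (HAux p p l)) =
    gfun (fun l => hw w' w l * algebraMap (ZMod p) A (HstarAux p p l)) *
      ∏ m ∈ Finset.Ioo 0 p, (1 - phi w (zz p A m)) := by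
  rw [gS' (p := p), gH' (p := p), Finset.sum_mul, ← Finset.sum_neg_distrib]
  refine Finset.sum_nbij' (fun m => p - m) (fun m => p - m) ?_ ?_ ?_ ?_ ?_
  · intro m; simp; omega
  · intro m; simp; omega
  · intro m; simp; omega
  · intro m; simp; omega
  · intro m hm
    rw [Finset.mem_Ioo] at hm
    rw [phi_tw _ _ hm.2.le, neg_mul, neg_neg, mul_assoc]
    congr 1
    have h1 := gS_prod (p := p) w (p - m)
    have h2 : gfun (fH p (tw w) m) = ∏ j ∈ Finset.Ioo (p - m) p, (1 - phi w (zz p A j)) := by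
      obtain ⟨n, rfl⟩ : ∃ n, m = n + 1 := ⟨m - 1, by omega⟩
      rw [gH_prod]
      refine Finset.prod_nbij' (fun m => p - m) (fun m => p - m) ?_ ?_ ?_ ?_ ?_
      · intro j; simp; omega
      · intro j; simp; omega
      · intro j; simp; omega
      · intro j; simp; omega
      · intro j hj
        rw [Finset.mem_Ioo] at hj
        rw [phi_tw _ _ (by omega), sub_eq_add_neg]
    have h3 : Finset.Ioo 0 p = Finset.Ioo 0 (p - m + 1) ∪ Finset.Ioo (p - m) p := by
      ext x; simp; omega
    have h4 : Disjoint (Finset.Ioo 0 (p - m + 1)) (Finset.Ioo (p - m) p) := by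
      rw [Finset.disjoint_left]; intro x; simp; omega
    rw [h3, Finset.prod_union h4, ← mul_assoc, h1, one_mul, h2]

theorem full_prod [hp : Fact p.Prime] (u : A) :
    ∃ E : PowerSeries A, ∏ m ∈ Finset.Ioo 0 p, (1 - phi (wt u) (zz p A m)) =
      1 + PowerSeries.X ^ (p - 1) * E := by
  have h : ∀ c : PowerSeries A,
      ∏ m ∈ Finset.Ioo 0 p, (1 - PowerSeries.C (zz p A m) * c) = 1 - c ^ (p - 1) := by
    intro c
    have := prod_one_sub (p := p) c
    simpa [zz, PowerSeries.algebraMap_apply] using this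
  have h1 : (∏ m ∈ Finset.Ioo 0 p, (1 - phi (wt u) (zz p A m))) *
      (1 - PowerSeries.X ^ (p - 1)) =
      (1 - (PowerSeries.C (1 + u) * PowerSeries.X) ^ (p - 1)) *
      (1 - (PowerSeries.C (1 - u) * PowerSeries.X) ^ (p - 1)) := by
    rw [← h, ← h, ← h, ← Finset.prod_mul_distrib, ← Finset.prod_mul_distrib]
    exact Finset.prod_congr rfl fun m _ => phi_mul u _
  set P := ∏ m ∈ Finset.Ioo 0 p, (1 - phi (wt u) (zz p A m))
  rw [mul_pow, mul_pow] at h1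
  exact ⟨P - PowerSeries.C (1 + u) ^ (p - 1) - PowerSeries.C (1 - u) ^ (p - 1) +
    PowerSeries.C (1 + u) ^ (p - 1) * PowerSeries.C (1 - u) ^ (p - 1) * PowerSeries.X ^ (p - 1),
    by linear_combination h1⟩

theorem main_coeff [hp : Fact p.Prime] (u : A) (k : ℕ) (hk : k + 1 < p) :
    ∑ c : Composition k, hw (wt' u) (wt u) c.blocks * algebraMap (ZMod p) A (Hps p c.blocks) =
    - ((-1) ^ k * ∑ c : Composition k, (-1) ^ c.length *
      (hw (wt' u) (wt u) c.blocks * algebraMap (ZMod p) A (Hp p c.blocks))) := by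
  obtain ⟨E, hE⟩ := full_prod (p := p) u
  have h := main_gf (p := p) (wt' u) (wt u)
  rw [hE, mul_add, mul_one, mul_left_comm] at h
  have := congrArg (PowerSeries.coeff k) h
  rw [map_add, PowerSeries.coeff_X_pow_mul', if_neg (by omega), add_zero, map_neg] at this
  simp only [gfun, PowerSeries.coeff_mk, hw_tw, Composition.blocks_sum,
    Composition.blocks_length] at this
  simp only [Hps, Hp]
  rw [← this, Finset.mul_sum]
  congr 1
  exact Finset.sum_congr rfl fun c _ => by ring

end main

theorem hw_eq {A : Type*} [CommRing A] (u : A) (l : List ℕ) :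
    hw (wt' u) (wt u) l =
      if 2 ≤ l.headI then (u ^ 2) ^ (l.filter fun x => 2 ≤ x).length else 0 := by
  have h : ∀ l : List ℕ, (l.map (wt u)).prod = (u ^ 2) ^ (l.filter fun x => 2 ≤ x).length := by
    intro l
    induction l with
    | nil => simp
    | cons a l ih =>
      by_cases ha : 2 ≤ a
      · simp [ih, wt, ha, pow_succ']
      · simp [ih, wt, ha]
  cases l with
  | nil => simp [hw]
  | cons a l =>
    by_cases ha : 2 ≤ a
    · simp [hw, h, wt', ha, pow_succ']
    · simp [hw, wt', ha]

theorem coeff_hw {R : Type*} [CommRing R] (l : List ℕ) (s : ℕ) (r : R) :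
    (hw (wt' (Polynomial.X : Polynomial R)) (wt Polynomial.X) l * Polynomial.C r).coeff (2 * s) =
      if 2 ≤ l.headI ∧ (l.filter fun x => 2 ≤ x).length = s then r else 0 := by
  rw [hw_eq, Polynomial.coeff_mul_C]
  by_cases h1 : 2 ≤ l.headI
  · rw [if_pos h1, ← pow_mul, Polynomial.coeff_X_pow]
    by_cases h2 : (l.filter fun x => 2 ≤ x).length = s
    · rw [if_pos (by rw [h2]), if_pos ⟨h1, h2⟩, one_mul]
    · rw [if_neg (by omega), if_neg (fun h => h2 h.2), zero_mul]
  · rw [if_neg h1, if_neg (fun h => h1 h.1)]; simp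

end

/-- Lemma relating star and non-star sums:
`∑_{𝐤 ∈ I₀(k,s)} H_p^⋆(𝐤) = (-1)^{k-1} ∑_{𝐤 ∈ I₀(k,s)} (-1)^{dep 𝐤} H_p(𝐤)` in `ℤ/pℤ`
for all sufficiently large primes `p`. -/
theorem stmt_14 (k s : ℕ) (hk : 2 ≤ k) (hs : 1 ≤ s) (hks : 2 * s ≤ k) :
    ∃ N : ℕ, ∀ p : ℕ, N ≤ p → p.Prime →
      ∑ c ∈ Izero k s, Hps p c.blocks =
        (-1 : ZMod p) ^ (k - 1) *
          ∑ c ∈ Izero k s, (-1 : ZMod p) ^ c.length * Hp p c.blocks := by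
  refine ⟨k + 2, fun p hpk hp => ?_⟩
  haveI : Fact p.Prime := ⟨hp⟩
  have h := main_coeff (p := p) (Polynomial.X : Polynomial (ZMod p)) k (by omega)
  have h' := congrArg (fun q => Polynomial.coeff q (2 * s)) h
  have e : ∀ (n : ℕ) (q : Polynomial (ZMod p)), ((-1) ^ n * q).coeff (2 * s) =
      (-1) ^ n * q.coeff (2 * s) := by
    intro n q
    have : ((-1) ^ n : Polynomial (ZMod p)) = Polynomial.C ((-1) ^ n) := by simp
    rw [this, Polynomial.coeff_C_mul]
  simp only [Polynomial.finset_sum_coeff, Polynomial.coeff_neg, e, Polynomial.algebraMap_eq,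
    coeff_hw] at h'
  obtain ⟨n, rfl⟩ : ∃ n, k = n + 1 := ⟨k - 1, by omega⟩
  rw [Izero, Finset.sum_filter, Finset.sum_filter, h', Nat.add_sub_cancel, pow_succ]
  simp only [mul_ite, mul_zero]
  ring
end
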